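/- arXiv:2101.03101 — 2 statements merged into one kernel-verified Lean document; each statement's English description precedes it below -/
import Mathlib

section
/- Shadow and Bol operators send H^# to holomorphic modular forms. Let N ≥ 1, χ a Dirichlet character mod N, k ∈ ℤ with k ≠ 1, and f ∈ H^#_k(N,χ). Then ξ_k(f) ∈ M_{2−k}(N, χ̄). Moreover, if k ≤ 0 then D^{1−k}(f) ∈ M_{2−k}(N, χ), where D = (1/(2πi)) ∂/∂τ. -/
open Complex MeasureTheory Set Filter

noncomputable section

/-- The upper half-plane, as a subset of `ℂ`. -/
def UHP : Set ℂ := {τ : ℂ | 0 < τ.im}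

/-- The weight-`k` slash operator for the matrix `(a b; c d)` (assumed of positive
determinant): `(f|_k γ)(τ) = (det γ)^(k/2) (cτ+d)^(-k) f((aτ+b)/(cτ+d))`. -/
def slash (k : ℤ) (a b c d : ℂ) (f : ℂ → ℂ) : ℂ → ℂ := fun τ =>
  (a * d - b * c) ^ ((k : ℂ) / 2) * (c * τ + d) ^ (-k) * f ((a * τ + b) / (c * τ + d))

/-- The Fricke involution `f ↦ f|_k ω(M)` with `ω(M) = (0 -1; M 0)`. -/
def fricke (k : ℤ) (M : ℕ) (f : ℂ → ℂ) : ℂ → ℂ := slash k 0 (-1) (M : ℂ) 0 f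

/-- Partial derivative in the real (`u`) direction. -/
def pdU (f : ℂ → ℂ) (τ : ℂ) : ℂ := fderiv ℝ f τ 1

/-- Partial derivative in the imaginary (`v`) direction. -/
def pdV (f : ℂ → ℂ) (τ : ℂ) : ℂ := fderiv ℝ f τ Complex.I

/-- Wirtinger derivative `∂/∂τ`. -/
def wirt (f : ℂ → ℂ) (τ : ℂ) : ℂ := (pdU f τ - Complex.I * pdV f τ) / 2

/-- Wirtinger derivative `∂/∂τ̄`. -/
def wirtBar (f : ℂ → ℂ) (τ : ℂ) : ℂ := (pdU f τ + Complex.I * pdV f τ) / 2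

/-- The weight-`k` hyperbolic Laplacian
`Δ_k = -v²(∂²/∂u² + ∂²/∂v²) + ikv(∂/∂u + i ∂/∂v)`. -/
def hypLaplacian (k : ℤ) (f : ℂ → ℂ) (τ : ℂ) : ℂ :=
  -(τ.im : ℂ) ^ 2 * (pdU (pdU f) τ + pdV (pdV f) τ)
    + Complex.I * (k : ℂ) * (τ.im : ℂ) * (pdU f τ + Complex.I * pdV f τ)

/-- Maass raising operator `R_k = 2i ∂/∂τ + k/v`. -/
def Rop (k : ℤ) (f : ℂ → ℂ) (τ : ℂ) : ℂ :=
  2 * Complex.I * wirt f τ + (k : ℂ) / (τ.im : ℂ) * f τ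

/-- Maass lowering operator `L_k = -2iv² ∂/∂τ̄`. -/
def Lop (f : ℂ → ℂ) (τ : ℂ) : ℂ := -2 * Complex.I * (τ.im : ℂ) ^ 2 * wirtBar f τ

/-- Shadow operator `ξ_k f = 2i v^k conj(∂f/∂τ̄)`. -/
def xiOp (k : ℤ) (f : ℂ → ℂ) (τ : ℂ) : ℂ :=
  2 * Complex.I * (τ.im : ℂ) ^ k * (starRingEnd ℂ) (wirtBar f τ)

/-- The operator `D = (1/(2πi)) ∂/∂τ`. -/
def Dop (f : ℂ → ℂ) : ℂ → ℂ := fun τ => wirt f τ / (2 * Real.pi * Complex.I)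

/-- Modularity: `f|_k γ = χ(d) f` for all `γ = (a b; c d) ∈ Γ₀(N)`. -/
def SlashInv (k : ℤ) (N : ℕ) (χ : DirichletCharacter ℂ N) (f : ℂ → ℂ) : Prop :=
  ∀ a b c d : ℤ, a * d - b * c = 1 → (N : ℤ) ∣ c → ∀ τ ∈ UHP,
    slash k (a : ℂ) (b : ℂ) (c : ℂ) (d : ℂ) f τ = χ (d : ZMod N) * f τ

/-- At every cusp, `f|_k γ` grows at most linear-exponentially:
`(f|_k γ)(τ) = O(e^(εv))` as `v → ∞`. -/
def ExpGrowthAtCusps (k : ℤ) (f : ℂ → ℂ) : Prop :=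
  ∀ a b c d : ℤ, a * d - b * c = 1 →
    ∃ ε > (0 : ℝ), ∃ C v₀ : ℝ, ∀ τ ∈ UHP, v₀ ≤ τ.im →
      ‖slash k (a : ℂ) (b : ℂ) (c : ℂ) (d : ℂ) f τ‖ ≤ C * Real.exp (ε * τ.im)

/-- At every cusp, `f|_k γ` has at most polynomial growth as `v → ∞`. -/
def PolyGrowthAtCusps (k : ℤ) (f : ℂ → ℂ) : Prop :=
  ∀ a b c d : ℤ, a * d - b * c = 1 →
    ∃ A C v₀ : ℝ, ∀ τ ∈ UHP, v₀ ≤ τ.im →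
      ‖slash k (a : ℂ) (b : ℂ) (c : ℂ) (d : ℂ) f τ‖ ≤ C * τ.im ^ A

/-- At every cusp, `f|_k γ` stays bounded as `v → ∞`. -/
def BoundedAtCusps (k : ℤ) (f : ℂ → ℂ) : Prop :=
  ∀ a b c d : ℤ, a * d - b * c = 1 →
    ∃ C v₀ : ℝ, ∀ τ ∈ UHP, v₀ ≤ τ.im →
      ‖slash k (a : ℂ) (b : ℂ) (c : ℂ) (d : ℂ) f τ‖ ≤ C

/-- Harmonic Maass forms of manageable growth: the space `H^!_k(N,χ)`. -/
def IsHarmonicMaassMG (k : ℤ) (N : ℕ) (χ : DirichletCharacter ℂ N) (f : ℂ → ℂ) : Prop :=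
  ContDiffOn ℝ (⊤ : ℕ∞) f UHP ∧ SlashInv k N χ f ∧ (∀ τ ∈ UHP, hypLaplacian k f τ = 0) ∧
    ExpGrowthAtCusps k f

/-- Harmonic Maass forms of polynomial growth: the space `H^#_k(N,χ)`. -/
def IsHMFPolyGrowth (k : ℤ) (N : ℕ) (χ : DirichletCharacter ℂ N) (f : ℂ → ℂ) : Prop :=
  IsHarmonicMaassMG k N χ f ∧ PolyGrowthAtCusps k f

/-- Holomorphic modular forms of weight `k`: the space `M_k(N,χ)`. -/
def IsHolomorphicModularForm (k : ℤ) (N : ℕ) (χ : DirichletCharacter ℂ N) (f : ℂ → ℂ) : Prop :=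
  DifferentiableOn ℂ f UHP ∧ SlashInv k N χ f ∧ BoundedAtCusps k f

/-- The (real) incomplete gamma function `Γ(ν, x) = ∫_x^∞ e^(-t) t^(ν-1) dt`. -/
def incGamma (ν : ℝ) (x : ℝ) : ℝ := ∫ t in Ioi x, Real.exp (-t) * t ^ (ν - 1)

/-- The series `Σ_{n≥0} c⁺(n) qⁿ + c⁻(0) v^(1-k) + Σ_{n<0} c⁻(n) Γ(1-k, -4πnv) qⁿ`,
with `cm j` standing for `c⁻(-j)`. -/
def maassSeries (k : ℤ) (cp cm : ℕ → ℂ) : ℂ → ℂ := fun τ =>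
  (∑' n : ℕ, cp n * Complex.exp (2 * Real.pi * Complex.I * n * τ))
    + cm 0 * (τ.im : ℂ) ^ (1 - k)
    + ∑' n : ℕ, cm (n + 1) * (incGamma ((1 - k : ℤ) : ℝ) (4 * Real.pi * (n + 1) * τ.im) : ℂ)
        * Complex.exp (-(2 * Real.pi * Complex.I * (n + 1) * τ))

/-- `f` is given on `ℍ` by the harmonic-Maass-type Fourier series with
holomorphic-part coefficients `cp n = c⁺(n)` and nonholomorphic-part
coefficients `cm n = c⁻(-n)`. -/
def FourierShape (k : ℤ) (cp cm : ℕ → ℂ) (f : ℂ → ℂ) : Prop :=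
  ∀ τ ∈ UHP, f τ = maassSeries k cp cm τ

/-- Coefficients bounded by `O(n^α)`. -/
def CoeffBound (α : ℝ) (c : ℕ → ℂ) : Prop :=
  ∃ C : ℝ, ∀ n : ℕ, 1 ≤ n → ‖c n‖ ≤ C * (n : ℝ) ^ α

/-- Dirichlet series `Σ_{n≥1} c(n) n^(-s)`. -/
def LSer (c : ℕ → ℂ) (s : ℂ) : ℂ := ∑' n : ℕ, c (n + 1) / ((n : ℂ) + 1) ^ s

/-- `W_ν(s) = ∫₀^∞ Γ(ν,2x) eˣ x^(s-1) dx`. -/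
def Wnu (ν : ℝ) (s : ℂ) : ℂ :=
  ∫ x in Ioi (0 : ℝ), ((incGamma ν (2 * x) * Real.exp x : ℝ) : ℂ) * (x : ℂ) ^ (s - 1)

/-- Completed `L`-function `Λ_N(f,s)` (with twisting conductor `m`; `m = 1` is
the untwisted case): `(m√N/(2π))^s [Γ(s) L⁺(s) + W_{1-k}(s) L⁻(s)]`. -/
def LambdaN (N : ℕ) (k : ℤ) (m : ℕ) (cp cm : ℕ → ℂ) (s : ℂ) : ℂ :=
  ((m * Real.sqrt N / (2 * Real.pi) : ℝ) : ℂ) ^ s *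
    (Complex.Gamma s * LSer cp s + Wnu ((1 - k : ℤ) : ℝ) s * LSer cm s)

/-- `Ξ_N(f,s) = (m√N/(2π))^s [Γ(s+1) L⁺(s) - W_{1-k}(s+1) L⁻(s)]`. -/
def XiN (N : ℕ) (k : ℤ) (m : ℕ) (cp cm : ℕ → ℂ) (s : ℂ) : ℂ :=
  ((m * Real.sqrt N / (2 * Real.pi) : ℝ) : ℂ) ^ s *
    (Complex.Gamma (s + 1) * LSer cp s - Wnu ((1 - k : ℤ) : ℝ) (s + 1) * LSer cm s)

/-- `Ω_N(f,s) = -2 Ξ_N(f,s) + k Λ_N(f,s)`. -/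
def OmegaN (N : ℕ) (k : ℤ) (m : ℕ) (cp cm : ℕ → ℂ) (s : ℂ) : ℂ :=
  -2 * XiN N k m cp cm s + (k : ℂ) * LambdaN N k m cp cm s

/-- Bounded on every vertical strip. -/
def BoundedVert (F : ℂ → ℂ) : Prop :=
  ∀ a b : ℝ, ∃ M : ℝ, ∀ s : ℂ, a ≤ s.re → s.re ≤ b → ‖F s‖ ≤ M

/-- `N^((1-k)/2)` as a complex number. -/
def Npow (N : ℕ) (k : ℤ) : ℂ := (N : ℂ) ^ ((1 - (k : ℂ)) / 2)

/-- Pole-correction terms for `Λ*`. -/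
def corrL (N : ℕ) (k : ℤ) (ι c0 d0 c0' d0' : ℂ) (s : ℂ) : ℂ :=
  c0 / s + ι * d0 / ((k : ℂ) - s) + c0' / Npow N k / (s - (k : ℂ) + 1)
    + ι * d0' / Npow N k / (1 - s)

/-- Pole-correction terms for `Ω*`. -/
def corrO (N : ℕ) (k : ℤ) (ι c0 d0 c0' d0' : ℂ) (s : ℂ) : ℂ :=
  (k : ℂ) * (c0 / s - ι * d0 / ((k : ℂ) - s) + c0' / Npow N k / (s - (k : ℂ) + 1)
    - ι * d0' / Npow N k / (1 - s))

/-- The pole-corrected function `L + corr` agrees away from `{0, k, 1, k-1}` with an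
entire function that is bounded on vertical strips. -/
def EntireBddCorrected (k : ℤ) (L corr : ℂ → ℂ) : Prop :=
  ∃ F : ℂ → ℂ, Differentiable ℂ F ∧ BoundedVert F ∧
    ∀ s : ℂ, s ≠ 0 → s ≠ (k : ℂ) → s ≠ 1 → s ≠ (k : ℂ) - 1 → F s = L s + corr s

/-- Condition (2)(a) of the main theorem: meromorphic continuation, functional
equations, and entire pole-corrected completions bounded on vertical strips. -/
def AnalyticPackage (N : ℕ) (k : ℤ) (α : ℝ) (cfp cfm cgp cgm : ℕ → ℂ) : Prop :=
  ∃ Lf Lg Of' Og : ℂ → ℂ,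
    (∀ s : ℂ, α + 1 < s.re → Lf s = LambdaN N k 1 cfp cfm s) ∧
    (∀ s : ℂ, α + 1 < s.re → Lg s = LambdaN N k 1 cgp cgm s) ∧
    (∀ s : ℂ, α + 1 < s.re → Of' s = OmegaN N k 1 cfp cfm s) ∧
    (∀ s : ℂ, α + 1 < s.re → Og s = OmegaN N k 1 cgp cgm s) ∧
    (∀ s : ℂ, Lf s = Complex.I ^ k * Lg ((k : ℂ) - s)) ∧
    (∀ s : ℂ, Of' s = -(Complex.I ^ k) * Og ((k : ℂ) - s)) ∧
    EntireBddCorrected k Lf (corrL N k (Complex.I ^ k) (cfp 0) (cgp 0) (cfm 0) (cgm 0)) ∧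
    EntireBddCorrected k Lg (corrL N k (Complex.I ^ (-k)) (cgp 0) (cfp 0) (cgm 0) (cfm 0)) ∧
    EntireBddCorrected k Of' (corrO N k (Complex.I ^ k) (cfp 0) (cgp 0) (cfm 0) (cgm 0)) ∧
    EntireBddCorrected k Og (corrO N k (Complex.I ^ (-k)) (cgp 0) (cfp 0) (cgm 0) (cfm 0))

/-- The complex conjugate of a Dirichlet character. -/
def conjChar {N : ℕ} (χ : DirichletCharacter ℂ N) : DirichletCharacter ℂ N :=
  χ.ringHomComp (starRingEnd ℂ)

/-- Twist of a coefficient sequence by a Dirichlet character. -/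
def twistC {m : ℕ} (ψ : DirichletCharacter ℂ m) (c : ℕ → ℂ) : ℕ → ℂ :=
  fun n => ψ (n : ZMod m) * c n

/-- The twisted Fourier series `f_ψ`. -/
def twistFn (k : ℤ) {m : ℕ} (ψ : DirichletCharacter ℂ m) (cp cm : ℕ → ℂ) : ℂ → ℂ :=
  maassSeries k (twistC ψ cp) (twistC ψ cm)

/-- The Gauss sum `τ(ψ) = Σ_{a=0}^{m-1} ψ(a) e^(2πia/m)`. -/
def gSum (m : ℕ) (ψ : DirichletCharacter ℂ m) : ℂ :=
  ∑ a ∈ Finset.range m, ψ (a : ZMod m) * Complex.exp (2 * Real.pi * Complex.I * a / m)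

/-- The analytic package for the `ψ`-twisted completed Dirichlet series: entire
continuations, bounded on vertical strips, with functional equations with
constant `Cψ`. -/
def TwistedPackage (N : ℕ) (k : ℤ) (α : ℝ) (m : ℕ) (ψ : DirichletCharacter ℂ m)
    (cfp cfm cgp cgm : ℕ → ℂ) (Cψ : ℂ) : Prop :=
  ∃ Lf Lg Of' Og : ℂ → ℂ,
    (∀ s : ℂ, α + 1 < s.re → Lf s = LambdaN N k m (twistC ψ cfp) (twistC ψ cfm) s) ∧
    (∀ s : ℂ, α + 1 < s.re →
      Lg s = LambdaN N k m (twistC (conjChar ψ) cgp) (twistC (conjChar ψ) cgm) s) ∧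
    (∀ s : ℂ, α + 1 < s.re → Of' s = OmegaN N k m (twistC ψ cfp) (twistC ψ cfm) s) ∧
    (∀ s : ℂ, α + 1 < s.re →
      Og s = OmegaN N k m (twistC (conjChar ψ) cgp) (twistC (conjChar ψ) cgm) s) ∧
    Differentiable ℂ Lf ∧ Differentiable ℂ Lg ∧ Differentiable ℂ Of' ∧ Differentiable ℂ Og ∧
    BoundedVert Lf ∧ BoundedVert Lg ∧ BoundedVert Of' ∧ BoundedVert Og ∧
    (∀ s : ℂ, Lf s = Complex.I ^ k * Cψ * Lg ((k : ℂ) - s)) ∧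
    (∀ s : ℂ, Of' s = -(Complex.I ^ k) * Cψ * Og ((k : ℂ) - s))

abbrev SL2Z := Matrix.SpecialLinearGroup (Fin 2) ℤ

/-- Entry of a matrix in `SL₂(ℤ)`. -/
def mEntry (g : SL2Z) (i j : Fin 2) : ℤ := (g : Matrix (Fin 2) (Fin 2) ℤ) i j

/-- Slash by a matrix in `SL₂(ℤ)`. -/
def slashM (k : ℤ) (g : SL2Z) (f : ℂ → ℂ) : ℂ → ℂ :=
  slash k (mEntry g 0 0 : ℂ) (mEntry g 0 1 : ℂ) (mEntry g 1 0 : ℂ) (mEntry g 1 1 : ℂ) f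

/-- `Γ₀(N)` as a subset of `SL₂(ℤ)`. -/
def Gamma0Set (N : ℕ) : Set SL2Z := {g | (N : ℤ) ∣ mEntry g 1 0}

/-- `Γ_∞`, the stabiliser of `i∞` in `SL₂(ℤ)`. -/
def GammaInfSet : Set SL2Z := {g | mEntry g 1 0 = 0}

/-- `Γ_ρ = Γ₀(N) ∩ γ_ρ Γ_∞ γ_ρ⁻¹` for the cusp `ρ = γ_ρ(i∞)`. -/
def GammaCusp (N : ℕ) (γρ : SL2Z) : Set SL2Z :=
  {g | g ∈ Gamma0Set N ∧ γρ⁻¹ * g * γρ ∈ GammaInfSet}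

/-- `R` is a complete set of representatives for `Γ_ρ \ Γ₀(N)`. -/
def IsCosetReps (N : ℕ) (γρ : SL2Z) (R : Set SL2Z) : Prop :=
  R ⊆ Gamma0Set N ∧
    ∀ g ∈ Gamma0Set N, ∃! r : SL2Z, r ∈ R ∧ ∃ γ ∈ GammaCusp N γρ, g = γ * r

/-- `χ(g) := χ(d)` for `g = (a b; c d)`. -/
def chiOf {N : ℕ} (χ : DirichletCharacter ℂ N) (g : SL2Z) : ℂ :=
  χ ((mEntry g 1 1 : ℤ) : ZMod N)

/-- The preimage `𝓕_{k,ρ}(N,χ;τ) = Σ_{g ∈ Γ_ρ\Γ₀(N)} χ̄(g) (v^(1-k)/(1-k))|_k γ_ρ⁻¹ g`,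
computed using a set `R` of coset representatives. -/
def FEis (k : ℤ) (N : ℕ) (χ : DirichletCharacter ℂ N) (γρ : SL2Z) (R : Set SL2Z) : ℂ → ℂ :=
  fun τ => ∑' r : R, (starRingEnd ℂ) (chiOf χ (r : SL2Z)) *
    slashM k (γρ⁻¹ * (r : SL2Z)) (fun z => (z.im : ℂ) ^ (1 - k) / ((1 : ℂ) - (k : ℂ))) τ

/-- The Eisenstein series `E_{2-k,ρ}(N,χ;τ) = Σ_{g ∈ Γ_ρ\Γ₀(N)} χ̄(g) j(γ_ρ⁻¹g, τ)^(k-2)`,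
computed using a set `R` of coset representatives. -/
def EisSeries (k : ℤ) (N : ℕ) (χ : DirichletCharacter ℂ N) (γρ : SL2Z) (R : Set SL2Z) :
    ℂ → ℂ := fun τ => ∑' r : R, (starRingEnd ℂ) (chiOf χ (r : SL2Z)) *
      ((mEntry (γρ⁻¹ * (r : SL2Z)) 1 0 : ℂ) * τ + (mEntry (γρ⁻¹ * (r : SL2Z)) 1 1 : ℂ)) ^ (k - 2)

/-- Two cusps `γν(i∞)` and `γρ(i∞)` are `Γ₀(N)`-equivalent. -/
def CuspEquiv (N : ℕ) (γν γρ : SL2Z) : Prop :=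
  ∃ g ∈ Gamma0Set N, ∃ h ∈ GammaInfSet, γν = g * γρ * h

/-! ### Smooth functions on the upper half-plane and Wirtinger calculus -/

/-- Smoothness on the upper half-plane. -/
def Sm (F : ℂ → ℂ) : Prop := ContDiffOn ℝ (⊤ : ℕ∞) F UHP

lemma isOpen_UHP : IsOpen UHP := isOpen_lt continuous_const Complex.continuous_im

lemma UHP_nhds {τ : ℂ} (h : τ ∈ UHP) : UHP ∈ nhds τ := isOpen_UHP.mem_nhds h

lemma Sm.diffAt {F : ℂ → ℂ} (hF : Sm F) {τ : ℂ} (h : τ ∈ UHP) : DifferentiableAt ℝ F τ :=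
  (hF.contDiffAt (UHP_nhds h)).differentiableAt (by simp)

lemma Sm.contAt {F : ℂ → ℂ} (hF : Sm F) {τ : ℂ} (h : τ ∈ UHP) : ContinuousAt F τ :=
  (hF.diffAt h).continuousAt

lemma Sm.congr {F G : ℂ → ℂ} (hF : Sm F) (h : ∀ τ ∈ UHP, G τ = F τ) : Sm G :=
  ContDiffOn.congr hF h

lemma Sm.fderivApply {F : ℂ → ℂ} (hF : Sm F) (w : ℂ) : Sm (fun τ => fderiv ℝ F τ w) := by
  have := ContDiffOn.fderiv_of_isOpen (m := (⊤ : ℕ∞)) hF isOpen_UHP (by simp)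
  exact this.clm_apply contDiffOn_const

lemma Sm.mul {F G : ℂ → ℂ} (hF : Sm F) (hG : Sm G) : Sm (fun τ => F τ * G τ) :=
  ContDiffOn.mul hF hG

lemma Sm.add {F G : ℂ → ℂ} (hF : Sm F) (hG : Sm G) : Sm (fun τ => F τ + G τ) :=
  ContDiffOn.add hF hG

lemma Sm.sub {F G : ℂ → ℂ} (hF : Sm F) (hG : Sm G) : Sm (fun τ => F τ - G τ) :=
  ContDiffOn.sub hF hG

lemma Sm.const (c : ℂ) : Sm (fun _ => c) := contDiffOn_const

lemma Sm.conj {F : ℂ → ℂ} (hF : Sm F) : Sm (fun τ => (starRingEnd ℂ) (F τ)) :=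
  (Complex.conjCLE.contDiff.comp_contDiffOn hF)

lemma Sm.wirt {F : ℂ → ℂ} (hF : Sm F) : Sm (wirt F) := by
  have : Sm (fun τ => (fderiv ℝ F τ 1 - Complex.I * fderiv ℝ F τ Complex.I) * (1 / 2)) :=
    ((hF.fderivApply 1).sub ((Sm.const Complex.I).mul (hF.fderivApply Complex.I))).mul (Sm.const _)
  exact this.congr fun τ _ => by simp only [_root_.wirt, pdU, pdV]; ring

lemma Sm.wirtBar {F : ℂ → ℂ} (hF : Sm F) : Sm (wirtBar F) := by
  have : Sm (fun τ => (fderiv ℝ F τ 1 + Complex.I * fderiv ℝ F τ Complex.I) * (1 / 2)) :=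
    ((hF.fderivApply 1).add ((Sm.const Complex.I).mul (hF.fderivApply Complex.I))).mul (Sm.const _)
  exact this.congr fun τ _ => by simp only [_root_.wirtBar, pdU, pdV]; ring

lemma Sm.wirtIter {F : ℂ → ℂ} (hF : Sm F) (n : ℕ) : Sm (_root_.wirt^[n] F) := by
  induction n with
  | zero => exact hF
  | succ n ih => rw [Function.iterate_succ_apply']; exact ih.wirt

lemma Sm.ofHol {F : ℂ → ℂ} (hF : DifferentiableOn ℂ F UHP) : Sm F :=
  ((hF.contDiffOn isOpen_UHP (n := (⊤ : ℕ∞))).restrict_scalars ℝ)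

lemma Sm.imZpow (m : ℤ) : Sm (fun τ => (τ.im : ℂ) ^ m) := by
  intro τ hτ
  have hτ' : (0 : ℝ) < τ.im := hτ
  have h0 : (τ.im : ℂ) ≠ 0 := by exact_mod_cast hτ'.ne'
  have h1 : ContDiffAt ℂ (⊤ : ℕ∞) (fun z : ℂ => z ^ m) (τ.im : ℂ) := by
    rcases m with m | m
    · simpa using (contDiff_id.pow m).contDiffAt
    · have : (fun z : ℂ => z ^ (Int.negSucc m)) = fun z => (z ^ (m + 1))⁻¹ := by
        ext z; simp [zpow_negSucc]
      rw [this]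
      exact (contDiff_id.pow (m + 1)).contDiffAt.inv (by simpa using h0)
  have h2 : ContDiff ℝ (⊤ : ℕ∞) (fun τ : ℂ => (τ.im : ℂ)) :=
    Complex.ofRealCLM.contDiff.comp Complex.imCLM.contDiff
  exact ((h1.restrict_scalars ℝ).comp τ h2.contDiffAt).contDiffWithinAt

lemma wirt_congr {F G : ℂ → ℂ} (h : ∀ τ ∈ UHP, F τ = G τ) : ∀ τ ∈ UHP, wirt F τ = wirt G τ := by
  intro τ hτ
  have : F =ᶠ[nhds τ] G := Filter.eventually_of_mem (UHP_nhds hτ) h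
  simp only [wirt, pdU, pdV, this.fderiv_eq]

lemma wirtBar_congr {F G : ℂ → ℂ} (h : ∀ τ ∈ UHP, F τ = G τ) :
    ∀ τ ∈ UHP, wirtBar F τ = wirtBar G τ := by
  intro τ hτ
  have : F =ᶠ[nhds τ] G := Filter.eventually_of_mem (UHP_nhds hτ) h
  simp only [wirtBar, pdU, pdV, this.fderiv_eq]

lemma wirtIter_congr {F G : ℂ → ℂ} (h : ∀ τ ∈ UHP, F τ = G τ) (n : ℕ) :
    ∀ τ ∈ UHP, wirt^[n] F τ = wirt^[n] G τ := by
  induction n with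
  | zero => exact h
  | succ n ih => simp only [Function.iterate_succ_apply']; exact wirt_congr ih

section pointwise
variable {F G : ℂ → ℂ} {τ : ℂ}

lemma wirt_mul (hF : DifferentiableAt ℝ F τ) (hG : DifferentiableAt ℝ G τ) :
    wirt (fun z => F z * G z) τ = wirt F τ * G τ + F τ * wirt G τ := by
  simp only [wirt, pdU, pdV, fderiv_fun_mul hF hG]
  simp; ring

lemma wirtBar_mul (hF : DifferentiableAt ℝ F τ) (hG : DifferentiableAt ℝ G τ) :
    wirtBar (fun z => F z * G z) τ = wirtBar F τ * G τ + F τ * wirtBar G τ := by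
  simp only [wirtBar, pdU, pdV, fderiv_fun_mul hF hG]
  simp; ring

lemma wirt_add (hF : DifferentiableAt ℝ F τ) (hG : DifferentiableAt ℝ G τ) :
    wirt (fun z => F z + G z) τ = wirt F τ + wirt G τ := by
  simp only [wirt, pdU, pdV, fderiv_fun_add hF hG]
  simp; ring

lemma wirt_const (c : ℂ) : wirt (fun _ => c) τ = 0 := by
  simp [wirt, pdU, pdV]

lemma wirtBar_const (c : ℂ) : wirtBar (fun _ => c) τ = 0 := by
  simp [wirtBar, pdU, pdV]

lemma wirt_cmul (c : ℂ) (hF : DifferentiableAt ℝ F τ) :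
    wirt (fun z => c * F z) τ = c * wirt F τ := by
  rw [wirt_mul (differentiableAt_const c) hF, wirt_const]; ring

lemma wirtBar_cmul (c : ℂ) (hF : DifferentiableAt ℝ F τ) :
    wirtBar (fun z => c * F z) τ = c * wirtBar F τ := by
  rw [wirtBar_mul (differentiableAt_const c) hF, wirtBar_const]; ring

lemma fderiv_conj_apply (hF : DifferentiableAt ℝ F τ) (w : ℂ) :
    fderiv ℝ (fun z => (starRingEnd ℂ) (F z)) τ w = (starRingEnd ℂ) (fderiv ℝ F τ w) := by
  have h := (Complex.conjCLE.toContinuousLinearMap.hasFDerivAt (x := F τ)).comp τ hF.hasFDerivAt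
  have h' : HasFDerivAt (fun z => (starRingEnd ℂ) (F z)) _ τ := h
  rw [h'.fderiv]; simp

lemma wirt_conj (hF : DifferentiableAt ℝ F τ) :
    wirt (fun z => (starRingEnd ℂ) (F z)) τ = (starRingEnd ℂ) (wirtBar F τ) := by
  simp only [wirt, wirtBar, pdU, pdV, fderiv_conj_apply hF]
  have h2 : (starRingEnd ℂ) 2 = 2 := map_ofNat _ 2
  simp [h2]; ring

lemma wirtBar_conj (hF : DifferentiableAt ℝ F τ) :
    wirtBar (fun z => (starRingEnd ℂ) (F z)) τ = (starRingEnd ℂ) (wirt F τ) := by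
  simp only [wirt, wirtBar, pdU, pdV, fderiv_conj_apply hF]
  have h2 : (starRingEnd ℂ) 2 = 2 := map_ofNat _ 2
  simp [h2]

lemma wirt_hol {c : ℂ} (hF : HasDerivAt F c τ) : wirt F τ = c := by
  have h : HasFDerivAt F _ τ := hF.hasFDerivAt.restrictScalars ℝ
  simp only [wirt, pdU, pdV, h.fderiv]
  simp
  linear_combination (-c / 2) * Complex.I_mul_I

lemma wirtBar_hol (hF : DifferentiableAt ℂ F τ) : wirtBar F τ = 0 := by
  have h := (differentiableAt_complex_iff_differentiableAt_real.1 hF).2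
  simp only [wirtBar, pdU, pdV, h]
  simp
  linear_combination (fderiv ℝ F τ 1) * Complex.I_mul_I

lemma hol_of_wirtBar (hF : DifferentiableAt ℝ F τ) (h : wirtBar F τ = 0) :
    DifferentiableAt ℂ F τ := by
  refine differentiableAt_complex_iff_differentiableAt_real.2 ⟨hF, ?_⟩
  simp only [wirtBar, pdU, pdV] at h
  simp only [smul_eq_mul]
  linear_combination (-2 * Complex.I) * h + (fderiv ℝ F τ Complex.I) * Complex.I_mul_I

lemma fderiv_comp_hol {g : ℂ → ℂ} {c : ℂ} (hg : HasDerivAt g c τ)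
    (hF : DifferentiableAt ℝ F (g τ)) (w : ℂ) :
    fderiv ℝ (fun z => F (g z)) τ w
      = (c * w).re * fderiv ℝ F (g τ) 1 + (c * w).im * fderiv ℝ F (g τ) Complex.I := by
  have h : HasFDerivAt g _ τ := hg.hasFDerivAt.restrictScalars ℝ
  have h2 : HasFDerivAt (fun z => F (g z)) _ τ := hF.hasFDerivAt.comp τ h
  rw [h2.fderiv]
  have e : w * c = (c * w).re • (1 : ℂ) + (c * w).im • Complex.I := by
    rw [mul_comm]
    simp only [Complex.real_smul, mul_one]
    exact (Complex.re_add_im _).symm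
  simp only [ContinuousLinearMap.comp_apply, ContinuousLinearMap.coe_restrictScalars',
    ContinuousLinearMap.toSpanSingleton_apply, smul_eq_mul]
  rw [e, map_add, map_smul, map_smul]
  simp

lemma wirt_comp_hol {g : ℂ → ℂ} {c : ℂ} (hg : HasDerivAt g c τ)
    (hF : DifferentiableAt ℝ F (g τ)) :
    wirt (fun z => F (g z)) τ = c * wirt F (g τ) := by
  simp only [wirt, pdU, pdV, fderiv_comp_hol hg hF]
  have hc := Complex.re_add_im c
  simp
  linear_combination (fderiv ℝ F (g τ) Complex.I * c.im / 2) * Complex.I_mul_I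
    + ((fderiv ℝ F (g τ) 1 - Complex.I * fderiv ℝ F (g τ) Complex.I) / 2) * hc

lemma wirtBar_comp_hol {g : ℂ → ℂ} {c : ℂ} (hg : HasDerivAt g c τ)
    (hF : DifferentiableAt ℝ F (g τ)) :
    wirtBar (fun z => F (g z)) τ = (starRingEnd ℂ) c * wirtBar F (g τ) := by
  simp only [wirtBar, pdU, pdV, fderiv_comp_hol hg hF]
  have hc : (starRingEnd ℂ) c = c.re - c.im * Complex.I := by
    apply Complex.ext <;> simp
  rw [hc]
  simp
  linear_combination (fderiv ℝ F (g τ) Complex.I * c.im / 2) * Complex.I_mul_I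

end pointwise

lemma fderiv_im_zpow (m : ℤ) {τ : ℂ} (hτ : τ ∈ UHP) (w : ℂ) :
    fderiv ℝ (fun z : ℂ => (z.im : ℂ) ^ m) τ w = m * (τ.im : ℂ) ^ (m - 1) * w.im := by
  have hτ' : (0 : ℝ) < τ.im := hτ
  have h0 : (τ.im : ℂ) ≠ 0 := by exact_mod_cast hτ'.ne'
  have h1 : HasFDerivAt (fun z : ℂ => z ^ m) _ (τ.im : ℂ) :=
    (hasDerivAt_zpow m (τ.im : ℂ) (Or.inl h0)).hasFDerivAt.restrictScalars ℝ
  have h2 : HasFDerivAt (fun τ : ℂ => (τ.im : ℂ)) (Complex.ofRealCLM.comp Complex.imCLM) τ :=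
    (Complex.ofRealCLM.comp Complex.imCLM).hasFDerivAt
  have h3 : HasFDerivAt (fun z : ℂ => (z.im : ℂ) ^ m) _ τ := 
    HasFDerivAt.comp (g := fun z : ℂ => z ^ m) τ h1 h2
  rw [h3.fderiv]
  simp; ring

lemma wirt_im_zpow (m : ℤ) {τ : ℂ} (hτ : τ ∈ UHP) :
    wirt (fun z : ℂ => (z.im : ℂ) ^ m) τ = -(Complex.I / 2) * m * (τ.im : ℂ) ^ (m - 1) := by
  simp only [wirt, pdU, pdV, fderiv_im_zpow m hτ]
  simp; ring

lemma wirtBar_im_zpow (m : ℤ) {τ : ℂ} (hτ : τ ∈ UHP) :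
    wirtBar (fun z : ℂ => (z.im : ℂ) ^ m) τ = (Complex.I / 2) * m * (τ.im : ℂ) ^ (m - 1) := by
  simp only [wirtBar, pdU, pdV, fderiv_im_zpow m hτ]
  simp; ring

lemma fderiv_fderiv_apply {F : ℂ → ℂ} (hF : Sm F) {τ : ℂ} (hτ : τ ∈ UHP) (w z : ℂ) :
    fderiv ℝ (fun x => fderiv ℝ F x w) τ z = fderiv ℝ (fderiv ℝ F) τ z w := by
  have h : DifferentiableAt ℝ (fderiv ℝ F) τ :=
    ((ContDiffOn.fderiv_of_isOpen (m := (⊤ : ℕ∞)) hF isOpen_UHP (by simp)).contDiffAt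
      (UHP_nhds hτ)).differentiableAt (by simp)
  rw [fderiv_clm_apply h (differentiableAt_const w)]
  simp

lemma fderiv_swap {F : ℂ → ℂ} (hF : Sm F) {τ : ℂ} (hτ : τ ∈ UHP) (w z : ℂ) :
    fderiv ℝ (fun x => fderiv ℝ F x w) τ z = fderiv ℝ (fun x => fderiv ℝ F x z) τ w := by
  rw [fderiv_fderiv_apply hF hτ, fderiv_fderiv_apply hF hτ]
  exact (ContDiffAt.isSymmSndFDerivAt (hF.contDiffAt (UHP_nhds hτ))
    (by simp; exact WithTop.coe_le_coe.2 (le_top : (2 : ℕ∞) ≤ ⊤))) z w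

lemma fderiv_wirt {F : ℂ → ℂ} (hF : Sm F) {τ : ℂ} (hτ : τ ∈ UHP) (z : ℂ) :
    fderiv ℝ (wirt F) τ z = (fderiv ℝ (fun x => fderiv ℝ F x 1) τ z
      - Complex.I * fderiv ℝ (fun x => fderiv ℝ F x Complex.I) τ z) / 2 := by
  have h1 := ((hF.fderivApply 1).diffAt hτ).hasFDerivAt
  have h2 := ((hF.fderivApply Complex.I).diffAt hτ).hasFDerivAt
  have h3 := (h1.sub (h2.const_mul Complex.I)).mul_const (1 / 2)
  have h4 : wirt F = fun τ => (fderiv ℝ F τ 1 - Complex.I * fderiv ℝ F τ Complex.I) * (1 / 2) := by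
    ext x; simp only [wirt, pdU, pdV]; ring
  rw [h4]
  erw [h3.fderiv]
  simp; ring

lemma fderiv_wirtBar {F : ℂ → ℂ} (hF : Sm F) {τ : ℂ} (hτ : τ ∈ UHP) (z : ℂ) :
    fderiv ℝ (wirtBar F) τ z = (fderiv ℝ (fun x => fderiv ℝ F x 1) τ z
      + Complex.I * fderiv ℝ (fun x => fderiv ℝ F x Complex.I) τ z) / 2 := by
  have h1 := ((hF.fderivApply 1).diffAt hτ).hasFDerivAt
  have h2 := ((hF.fderivApply Complex.I).diffAt hτ).hasFDerivAt
  have h3 := (h1.add (h2.const_mul Complex.I)).mul_const (1 / 2)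
  have h4 : wirtBar F
      = fun τ => (fderiv ℝ F τ 1 + Complex.I * fderiv ℝ F τ Complex.I) * (1 / 2) := by
    ext x; simp only [wirtBar, pdU, pdV]; ring
  rw [h4]
  erw [h3.fderiv]
  simp; ring

lemma wirt_wirtBar_comm {F : ℂ → ℂ} (hF : Sm F) {τ : ℂ} (hτ : τ ∈ UHP) :
    wirtBar (wirt F) τ = wirt (wirtBar F) τ := by
  have e7 : wirtBar (wirt F) τ = (fderiv ℝ (wirt F) τ 1
    + Complex.I * fderiv ℝ (wirt F) τ Complex.I) / 2 := rfl
  have e6 : wirt (wirtBar F) τ = (fderiv ℝ (wirtBar F) τ 1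
    - Complex.I * fderiv ℝ (wirtBar F) τ Complex.I) / 2 := rfl
  have e1 := fderiv_wirt hF hτ 1
  have e2 := fderiv_wirt hF hτ Complex.I
  have e3 := fderiv_wirtBar hF hτ 1
  have e4 := fderiv_wirtBar hF hτ Complex.I
  have e5 := fderiv_swap hF hτ 1 Complex.I
  rw [e6, e7, e1, e2, e3, e4, e5]
  ring

lemma laplacian_wirt {F : ℂ → ℂ} (hF : Sm F) (k : ℤ) {τ : ℂ} (hτ : τ ∈ UHP) :
    hypLaplacian k F τ = -(τ.im : ℂ) ^ 2 * (4 * wirt (wirtBar F) τ)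
      + 2 * Complex.I * k * τ.im * wirtBar F τ := by
  have e3 := fderiv_wirtBar hF hτ 1
  have e4 := fderiv_wirtBar hF hτ Complex.I
  have e5 := fderiv_swap hF hτ 1 Complex.I
  have e6 : wirt (wirtBar F) τ = (fderiv ℝ (wirtBar F) τ 1
    - Complex.I * fderiv ℝ (wirtBar F) τ Complex.I) / 2 := rfl
  rw [e6, e3, e4, e5]
  simp only [hypLaplacian, wirtBar]
  unfold pdU pdV
  linear_combination (-(τ.im : ℂ) ^ 2 * fderiv ℝ (fun x => fderiv ℝ F x Complex.I) τ Complex.I)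
    * Complex.I_mul_I

/-! ### The slash action, covariance of `ξ` and The Bol identity -/

/-- The Moebius action. -/
def mob (a b c d : ℤ) (τ : ℂ) : ℂ := ((a : ℂ) * τ + b) / ((c : ℂ) * τ + d)

/-- The automorphy factor. -/
def jf (c d : ℤ) (τ : ℂ) : ℂ := (c : ℂ) * τ + d


lemma jf_ne {a b c d : ℤ} (had : a * d - b * c = 1) {τ : ℂ} (hτ : τ ∈ UHP) : jf c d τ ≠ 0 := by
  intro h
  have hτ' : (0 : ℝ) < τ.im := hτ
  have him := congrArg Complex.im h
  have hre := congrArg Complex.re h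
  simp [jf] at him hre
  rcases him with him | him
  · subst him
    simp at hre
    subst hre
    simp at had
  · exact hτ'.ne' him

lemma mob_im {a b c d : ℤ} (had : a * d - b * c = 1) {τ : ℂ} (hτ : τ ∈ UHP) : (mob a b c d τ).im = τ.im / Complex.normSq (jf c d τ) := by
  have h := jf_ne had hτ
  have hn : Complex.normSq (jf c d τ) ≠ 0 := by simpa using h
  have had' : (a : ℝ) * d - b * c = 1 := by exact_mod_cast had
  have : mob a b c d τ = ((a : ℂ) * τ + b) / jf c d τ := rfl
  rw [this, Complex.div_im]
  field_simp
  simp [jf]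
  linear_combination τ.im * had'

lemma mob_mem {a b c d : ℤ} (had : a * d - b * c = 1) {τ : ℂ} (hτ : τ ∈ UHP) : mob a b c d τ ∈ UHP := by
  have h := mob_im had hτ
  have hτ' : (0 : ℝ) < τ.im := hτ
  change 0 < (mob a b c d τ).im
  rw [h]
  exact div_pos hτ' (Complex.normSq_pos.2 (jf_ne had hτ))

lemma mob_im_complex {a b c d : ℤ} (had : a * d - b * c = 1) {τ : ℂ} (hτ : τ ∈ UHP) : ((mob a b c d τ).im : ℂ)
    = τ.im * ((jf c d τ)⁻¹ * ((starRingEnd ℂ) (jf c d τ))⁻¹) := by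
  rw [mob_im had hτ, Complex.ofReal_div, ← Complex.mul_conj, div_eq_mul_inv, mul_inv]

lemma mob_hasDerivAt {a b c d : ℤ} (had : a * d - b * c = 1) {τ : ℂ} (hτ : τ ∈ UHP) : HasDerivAt (mob a b c d) ((jf c d τ) ^ (-2 : ℤ)) τ := by
  have h := jf_ne had hτ
  have had' : (a : ℂ) * d - b * c = 1 := by exact_mod_cast had
  have h1 : HasDerivAt (fun z : ℂ => (a : ℂ) * z + b) a τ := by
    simpa using ((hasDerivAt_id τ).const_mul (a : ℂ)).add_const (b : ℂ)
  have h2 : HasDerivAt (fun z : ℂ => (c : ℂ) * z + d) c τ := by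
    simpa using ((hasDerivAt_id τ).const_mul (c : ℂ)).add_const (d : ℂ)
  have h3 := h1.div h2 h
  refine h3.congr_deriv ?_
  have h' : (c : ℂ) * τ + d ≠ 0 := h
  simp only [jf, zpow_neg]
  field_simp
  norm_cast
  linear_combination had'

lemma slash_eq {a b c d : ℤ} (had : a * d - b * c = 1) {τ : ℂ} (hτ : τ ∈ UHP) (k : ℤ) (f : ℂ → ℂ) :
    slash k a b c d f τ = (jf c d τ) ^ (-k) * f (mob a b c d τ) := by
  have had' : (a : ℂ) * d - b * c = 1 := by exact_mod_cast had
  simp [slash, had', jf, mob]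

lemma jf_zpow_hasDerivAt {a b c d : ℤ} (had : a * d - b * c = 1) {τ : ℂ} (hτ : τ ∈ UHP) (m : ℤ) :
    HasDerivAt (fun z => (jf c d z) ^ m) (m * c * (jf c d τ) ^ (m - 1)) τ := by
  have h := jf_ne had hτ
  have h2 : HasDerivAt (jf c d) c τ := by
    have : HasDerivAt (fun z : ℂ => (c : ℂ) * z + d) c τ := by
      simpa using ((hasDerivAt_id τ).const_mul (c : ℂ)).add_const (d : ℂ)
    exact this
  have h3 := (hasDerivAt_zpow m (jf c d τ) (Or.inl h)).comp τ h2
  exact h3.congr_deriv (by ring)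



lemma Sm.jfZpow {a b c d : ℤ} (had : a * d - b * c = 1) (m : ℤ) : Sm (fun z => (jf c d z) ^ m) :=
  Sm.ofHol fun _ hτ => (jf_zpow_hasDerivAt had hτ m).differentiableAt.differentiableWithinAt

lemma Sm.compMob {a b c d : ℤ} (had : a * d - b * c = 1) {F : ℂ → ℂ} (hF : Sm F) : Sm (fun z => F (mob a b c d z)) := by
  have h : Sm (mob a b c d) :=
    Sm.ofHol fun _ hτ => (mob_hasDerivAt had hτ).differentiableAt.differentiableWithinAt
  exact ContDiffOn.comp hF h fun τ hτ => mob_mem had hτ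

lemma Sm.slash {a b c d : ℤ} (had : a * d - b * c = 1) {F : ℂ → ℂ} (hF : Sm F) (k : ℤ) : Sm (slash k a b c d F) :=
  ((Sm.jfZpow had (-k)).mul (hF.compMob had)).congr fun _ hτ => slash_eq had hτ k F

lemma wirtBar_jf {a b c d : ℤ} (had : a * d - b * c = 1) {F : ℂ → ℂ} (hF : Sm F) (m : ℤ) {τ : ℂ} (hτ : τ ∈ UHP) :
    wirtBar (fun z => (jf c d z) ^ m * F (mob a b c d z)) τ
      = (jf c d τ) ^ m * ((starRingEnd ℂ) (jf c d τ)) ^ (-2 : ℤ)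
        * wirtBar F (mob a b c d τ) := by
  rw [wirtBar_mul ((Sm.jfZpow had m).diffAt hτ) ((hF.compMob had).diffAt hτ),
    wirtBar_hol (jf_zpow_hasDerivAt had hτ m).differentiableAt,
    wirtBar_comp_hol (mob_hasDerivAt had hτ) (hF.diffAt (mob_mem had hτ)), map_zpow₀]
  ring

lemma wirt_jf {a b c d : ℤ} (had : a * d - b * c = 1) {F : ℂ → ℂ} (hF : Sm F) (m : ℤ) {τ : ℂ} (hτ : τ ∈ UHP) :
    wirt (fun z => (jf c d z) ^ m * F (mob a b c d z)) τ
      = m * c * (jf c d τ) ^ (m - 1) * F (mob a b c d τ)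
        + (jf c d τ) ^ (m - 2) * wirt F (mob a b c d τ) := by
  have h := jf_ne had hτ
  rw [wirt_mul ((Sm.jfZpow had m).diffAt hτ) ((hF.compMob had).diffAt hτ),
    wirt_hol (jf_zpow_hasDerivAt had hτ m),
    wirt_comp_hol (mob_hasDerivAt had hτ) (hF.diffAt (mob_mem had hτ)), ← mul_assoc, ← zpow_add₀ h]
  rfl

lemma xi_slash {a b c d : ℤ} (had : a * d - b * c = 1) {F : ℂ → ℂ} (hF : Sm F) (k : ℤ) {τ : ℂ} (hτ : τ ∈ UHP) :
    xiOp k (slash k a b c d F) τ = slash (2 - k) a b c d (xiOp k F) τ := by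
  have h := jf_ne had hτ
  have hc : (starRingEnd ℂ) (jf c d τ) ≠ 0 := by simpa using h
  rw [slash_eq had hτ]
  simp only [xiOp]
  rw [wirtBar_congr (fun z hz => slash_eq had hz k F) τ hτ, wirtBar_jf had hF _ hτ,
    mob_im_complex had hτ]
  simp only [map_mul, map_zpow₀, Complex.conj_conj, mul_zpow, inv_zpow']
  have e : (jf c d τ) ^ (-(2 - k)) = (jf c d τ) ^ (-2 : ℤ) * (jf c d τ) ^ k := by
    rw [← zpow_add₀ h]; congr 1; ring
  rw [e]
  have e2 : (jf c d τ) ^ k * (jf c d τ) ^ (-k) = 1 := by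
    rw [← zpow_add₀ h]; simp
  linear_combination (-2 * Complex.I * (τ.im : ℂ) ^ k * (starRingEnd ℂ) (jf c d τ) ^ (-k) *
    (jf c d τ) ^ (-2 : ℤ) * (starRingEnd ℂ) (wirtBar F (mob a b c d τ))) * e2

lemma jf_hasDerivAt {c d : ℤ} (τ : ℂ) : HasDerivAt (jf c d) c τ := by
  have : HasDerivAt (fun z : ℂ => (c : ℂ) * z + d) c τ := by
    simpa using ((hasDerivAt_id τ).const_mul (c : ℂ)).add_const (d : ℂ)
  exact this

lemma Sm.jf {c d : ℤ} : Sm (jf c d) :=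
  Sm.ofHol fun τ _ => (jf_hasDerivAt τ).differentiableAt.differentiableWithinAt

lemma leibniz_jf {c d : ℤ} {H : ℂ → ℂ} (hH : Sm H) (n : ℕ) : ∀ τ ∈ UHP,
    wirt^[n + 1] (fun z => _root_.jf c d z * H z) τ
      = _root_.jf c d τ * wirt^[n + 1] H τ + (n + 1) * c * wirt^[n] H τ := by
  induction n with
  | zero =>
    intro τ hτ
    simp only [Function.iterate_succ_apply', Function.iterate_zero, id]
    rw [wirt_mul (Sm.jf.diffAt hτ) (hH.diffAt hτ), wirt_hol (jf_hasDerivAt τ)]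
    push_cast; ring
  | succ n ih =>
    intro τ hτ
    rw [Function.iterate_succ_apply', wirt_congr ih τ hτ,
      wirt_add ((Sm.jf.mul (hH.wirtIter _)).diffAt hτ)
        (((Sm.const _).mul (hH.wirtIter _)).diffAt hτ),
      wirt_mul (Sm.jf.diffAt hτ) ((hH.wirtIter _).diffAt hτ), wirt_hol (jf_hasDerivAt τ),
      wirt_cmul _ ((hH.wirtIter _).diffAt hτ), ← Function.iterate_succ_apply' wirt n,
      ← Function.iterate_succ_apply' wirt (n + 1)]
    push_cast; ring

/-- The Bol identity for smooth functions. -/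
lemma bol {a b c d : ℤ} (had : a * d - b * c = 1) {F : ℂ → ℂ} (hF : Sm F) (n : ℕ) : ∀ τ ∈ UHP,
    wirt^[n + 1] (fun z => (jf c d z) ^ (n : ℤ) * F (mob a b c d z)) τ
      = (jf c d τ) ^ (-(n : ℤ) - 2) * wirt^[n + 1] F (mob a b c d τ) := by
  induction n with
  | zero =>
    intro τ hτ
    simp only [Function.iterate_succ_apply', Function.iterate_zero, id]
    rw [wirt_jf had hF _ hτ]
    simp
  | succ n ih =>
    intro τ hτ
    have h := jf_ne had hτ
    have hS : Sm (fun z => (jf c d z) ^ (n : ℤ) * F (mob a b c d z)) :=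
      (Sm.jfZpow had n).mul (hF.compMob had)
    have e : ∀ z ∈ UHP, (jf c d z) ^ ((n + 1 : ℕ) : ℤ) * F (mob a b c d z)
        = jf c d z * ((jf c d z) ^ (n : ℤ) * F (mob a b c d z)) := by
      intro z _
      simp only [zpow_natCast, pow_succ]; ring
    rw [wirtIter_congr e _ τ hτ, leibniz_jf hS _ τ hτ, ih τ hτ,
      Function.iterate_succ_apply', wirt_congr ih τ hτ, wirt_jf had (hF.wirtIter _) _ hτ,
      ← Function.iterate_succ_apply' wirt]
    have e1 : jf c d τ * (jf c d τ) ^ (-(n : ℤ) - 2 - 1) = (jf c d τ) ^ (-(n : ℤ) - 2) := by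
      rw [← zpow_one_add₀ h]; congr 1; ring
    have e2 : jf c d τ * (jf c d τ) ^ (-(n : ℤ) - 2 - 2)
        = (jf c d τ) ^ (-((n + 1 : ℕ) : ℤ) - 2) := by
      rw [← zpow_one_add₀ h]; congr 1; push_cast; ring
    rw [← e2]
    push_cast
    linear_combination ((-(n : ℂ) - 2) * c * wirt^[n + 1] F (mob a b c d τ)) * e1


lemma Dop_iter {F : ℂ → ℂ} (hF : Sm F) (n : ℕ) : ∀ τ ∈ UHP,
    Dop^[n] F τ = ((2 * Real.pi * Complex.I)⁻¹) ^ n * wirt^[n] F τ := by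
  induction n with
  | zero => intro τ _; simp
  | succ n ih =>
    intro τ hτ
    rw [Function.iterate_succ_apply', Function.iterate_succ_apply', Dop, wirt_congr ih τ hτ,
      wirt_cmul _ ((hF.wirtIter _).diffAt hτ)]
    rw [pow_succ, div_eq_mul_inv]; ring

lemma xi_sm {F : ℂ → ℂ} (hF : Sm F) (k : ℤ) : Sm (xiOp k F) :=
  ((Sm.const (2 * Complex.I)).mul (Sm.imZpow k)).mul hF.wirtBar.conj

lemma xi_hol {F : ℂ → ℂ} (hF : Sm F) (k : ℤ) (hL : ∀ τ ∈ UHP, hypLaplacian k F τ = 0) :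
    DifferentiableOn ℂ (xiOp k F) UHP := by
  intro τ hτ
  refine (hol_of_wirtBar ((xi_sm hF k).diffAt hτ) ?_).differentiableWithinAt
  have h1 := hL τ hτ
  rw [laplacian_wirt hF k hτ] at h1
  have hτ' : (0 : ℝ) < τ.im := hτ
  have h0 : (τ.im : ℂ) ≠ 0 := by exact_mod_cast hτ'.ne'
  have h2 : wirt (wirtBar F) τ = Complex.I * k / (2 * τ.im) * wirtBar F τ := by
    field_simp
    have : (τ.im : ℂ) * (τ.im * wirt (wirtBar F) τ * 2 - Complex.I * k * wirtBar F τ) = 0 := by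
      linear_combination (-1 / 2) * h1
    rcases mul_eq_zero.1 this with h | h
    · exact absurd h h0
    · linear_combination h
  have h3 : (starRingEnd ℂ) (wirt (wirtBar F) τ)
      = -Complex.I * k / (2 * τ.im) * (starRingEnd ℂ) (wirtBar F τ) := by
    have h2' : (starRingEnd ℂ) 2 = 2 := map_ofNat _ 2
    rw [h2]; simp [h2']
  have e : xiOp k F = fun z => (2 * Complex.I * (z.im : ℂ) ^ k) * (starRingEnd ℂ) (wirtBar F z) :=
    rfl
  rw [e, wirtBar_mul (((Sm.const (2 * Complex.I)).mul (Sm.imZpow k)).diffAt hτ)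
    (hF.wirtBar.conj.diffAt hτ), wirtBar_cmul _ ((Sm.imZpow k).diffAt hτ),
    wirtBar_im_zpow k hτ, wirtBar_conj (hF.wirtBar.diffAt hτ), h3, zpow_sub_one₀ h0]
  field_simp
  ring

lemma wirtIter_wirtBar {F : ℂ → ℂ} (hF : Sm F) (n : ℕ) : ∀ τ ∈ UHP,
    wirtBar (wirt^[n] F) τ = wirt^[n] (wirtBar F) τ := by
  induction n with
  | zero => intro τ _; rfl
  | succ n ih =>
    intro τ hτ
    rw [Function.iterate_succ_apply', Function.iterate_succ_apply',
      wirt_wirtBar_comm (hF.wirtIter n) hτ, wirt_congr ih τ hτ]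

lemma wirtIter_kill {W : ℂ → ℂ} (hW : Sm W) (h0 : ∀ τ ∈ UHP, wirt W τ = 0) (n : ℕ) :
    ∀ C : ℂ, ∀ τ ∈ UHP, wirt^[n + 1] (fun z => C * ((z.im : ℂ) ^ (n : ℤ) * W z)) τ = 0 := by
  induction n with
  | zero =>
    intro C τ hτ
    simp only [Function.iterate_succ_apply', Function.iterate_zero, id]
    rw [wirt_cmul _ (((Sm.imZpow _).mul hW).diffAt hτ)]
    simp [h0 τ hτ]
  | succ n ih =>
    intro C τ hτ
    rw [Function.iterate_succ_apply]
    have e : ∀ z ∈ UHP, wirt (fun z => C * ((z.im : ℂ) ^ ((n + 1 : ℕ) : ℤ) * W z)) z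
        = (C * (-(Complex.I / 2) * (n + 1))) * ((z.im : ℂ) ^ (n : ℤ) * W z) := by
      intro z hz
      rw [wirt_cmul _ (((Sm.imZpow _).mul hW).diffAt hz),
        wirt_mul ((Sm.imZpow _).diffAt hz) (hW.diffAt hz), wirt_im_zpow _ hz, h0 z hz]
      push_cast
      simp only [add_sub_cancel_right]
      ring
    rw [wirtIter_congr e _ τ hτ]
    exact ih _ τ hτ

lemma bol_hol {F : ℂ → ℂ} (hF : Sm F) (n : ℕ)
    (hL : ∀ τ ∈ UHP, hypLaplacian (-(n : ℤ)) F τ = 0) :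
    DifferentiableOn ℂ (wirt^[n + 1] F) UHP := by
  intro τ hτ
  refine (hol_of_wirtBar ((hF.wirtIter _).diffAt hτ) ?_).differentiableWithinAt
  rw [wirtIter_wirtBar hF _ τ hτ]
  have hx := xi_hol hF _ hL
  have e : ∀ z ∈ UHP, wirtBar F z = (Complex.I / 2) * ((z.im : ℂ) ^ (n : ℤ)
      * (starRingEnd ℂ) (xiOp (-(n : ℤ)) F z)) := by
    intro z hz
    have hz' : (0 : ℝ) < z.im := hz
    have h0 : (z.im : ℂ) ≠ 0 := by exact_mod_cast hz'.ne'
    have h2' : (starRingEnd ℂ) 2 = 2 := map_ofNat _ 2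
    simp only [xiOp, map_mul, map_zpow₀, Complex.conj_conj, Complex.conj_ofReal, h2',
      Complex.conj_I]
    rw [zpow_neg]
    field_simp
    linear_combination (wirtBar F z) * Complex.I_mul_I
  rw [wirtIter_congr e _ τ hτ]
  refine wirtIter_kill (xi_sm hF _).conj ?_ n _ τ hτ
  intro z hz
  rw [wirt_conj ((xi_sm hF _).diffAt hz), wirtBar_hol ((hx z hz).differentiableAt (UHP_nhds hz))]
  simp

/-! ### Polynomial growth and smoothing -/

/-- Polynomial growth as `v → ∞`. -/
def PG (F : ℂ → ℂ) : Prop :=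
  ∃ (C : ℝ) (n : ℕ) (v₀ : ℝ), 0 ≤ C ∧ 1 ≤ v₀ ∧ ∀ τ : ℂ, v₀ ≤ τ.im → ‖F τ‖ ≤ C * τ.im ^ n

lemma mem_UHP_of_one_le {v : ℝ} (hv : 1 ≤ v) {τ : ℂ} (h : v ≤ τ.im) : τ ∈ UHP :=
  lt_of_lt_of_le zero_lt_one (hv.trans h)

lemma PG.congr {F G : ℂ → ℂ} (hF : PG F) (h : ∀ τ ∈ UHP, 1 ≤ τ.im → G τ = F τ) : PG G := by
  obtain ⟨C, n, v₀, hC, hv, hb⟩ := hF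
  refine ⟨C, n, v₀, hC, hv, fun τ hτ => ?_⟩
  rw [h τ (mem_UHP_of_one_le hv hτ) (hv.trans hτ)]
  exact hb τ hτ

lemma PG.neg {F : ℂ → ℂ} (hF : PG F) : PG (fun τ => -F τ) := by
  obtain ⟨C, n, v₀, hC, hv, hb⟩ := hF
  exact ⟨C, n, v₀, hC, hv, fun τ hτ => by rw [norm_neg]; exact hb τ hτ⟩

lemma PG.conj {F : ℂ → ℂ} (hF : PG F) : PG (fun τ => (starRingEnd ℂ) (F τ)) := by
  obtain ⟨C, n, v₀, hC, hv, hb⟩ := hF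
  exact ⟨C, n, v₀, hC, hv, fun τ hτ => by rw [RCLike.norm_conj]; exact hb τ hτ⟩

lemma PG.mul {F G : ℂ → ℂ} (hF : PG F) (hG : PG G) : PG (fun τ => F τ * G τ) := by
  obtain ⟨C, n, v₀, hC, hv, hb⟩ := hF
  obtain ⟨C', n', v₀', hC', hv', hb'⟩ := hG
  refine ⟨C * C', n + n', max v₀ v₀', mul_nonneg hC hC', hv.trans (le_max_left _ _),
    fun τ hτ => ?_⟩
  have h1 := hb τ ((le_max_left _ _).trans hτ)
  have h2 := hb' τ ((le_max_right _ _).trans hτ)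
  rw [norm_mul, pow_add]
  calc ‖F τ‖ * ‖G τ‖ ≤ (C * τ.im ^ n) * (C' * τ.im ^ n') :=
        mul_le_mul h1 h2 (norm_nonneg _) ((norm_nonneg _).trans h1)
    _ = _ := by ring

lemma PG.add {F G : ℂ → ℂ} (hF : PG F) (hG : PG G) : PG (fun τ => F τ + G τ) := by
  obtain ⟨C, n, v₀, hC, hv, hb⟩ := hF
  obtain ⟨C', n', v₀', hC', hv', hb'⟩ := hG
  refine ⟨C + C', n + n', max v₀ v₀', add_nonneg hC hC', hv.trans (le_max_left _ _),
    fun τ hτ => ?_⟩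
  have h1 := hb τ ((le_max_left _ _).trans hτ)
  have h2 := hb' τ ((le_max_right _ _).trans hτ)
  have hone : 1 ≤ τ.im := hv.trans ((le_max_left _ _).trans hτ)
  have h3 : τ.im ^ n ≤ τ.im ^ (n + n') := pow_le_pow_right₀ hone (by omega)
  have h4 : τ.im ^ n' ≤ τ.im ^ (n + n') := pow_le_pow_right₀ hone (by omega)
  calc ‖F τ + G τ‖ ≤ ‖F τ‖ + ‖G τ‖ := norm_add_le _ _
    _ ≤ C * τ.im ^ n + C' * τ.im ^ n' := add_le_add h1 h2
    _ ≤ C * τ.im ^ (n + n') + C' * τ.im ^ (n + n') := by gcongr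
    _ = _ := by ring

lemma PG.const (c : ℂ) : PG (fun _ => c) :=
  ⟨‖c‖, 0, 1, norm_nonneg _, le_rfl, fun τ _ => by simp⟩

lemma PG.imZpow (m : ℤ) : PG (fun τ => (τ.im : ℂ) ^ m) := by
  refine ⟨1, m.natAbs, 1, zero_le_one, le_rfl, fun τ hτ => ?_⟩
  have h0 : 0 ≤ τ.im := zero_le_one.trans hτ
  rw [norm_zpow, Complex.norm_real, Real.norm_of_nonneg h0, one_mul, ← zpow_natCast]
  exact zpow_le_zpow_right₀ hτ (by omega)

/-- Test functions supported in the closed ball of radius `1/2`. -/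
def Test (φ : ℂ → ℂ) : Prop :=
  ContDiff ℝ (⊤ : ℕ∞) φ ∧ tsupport φ ⊆ Metric.closedBall 0 (1 / 2)

lemma Test.hcs {φ : ℂ → ℂ} (h : Test φ) : HasCompactSupport φ :=
  HasCompactSupport.of_support_subset_isCompact (isCompact_closedBall 0 (1 / 2))
    (subset_closure.trans h.2)

lemma ball_mem_UHP {τ z : ℂ} (hτ : 1 ≤ τ.im) (hz : z ∈ Metric.closedBall (0 : ℂ) (1 / 2)) :
    τ + z ∈ UHP ∧ τ.im - 1 / 2 ≤ (τ + z).im ∧ (τ + z).im ≤ τ.im + 1 / 2 := by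
  have h : ‖z‖ ≤ 1 / 2 := by simpa using hz
  have h2 := abs_le.1 ((Complex.abs_im_le_norm z).trans h)
  have h3 : (τ + z).im = τ.im + z.im := by simp
  refine ⟨?_, ?_, ?_⟩
  · change 0 < (τ + z).im
    rw [h3]; linarith [h2.1]
  · rw [h3]; linarith [h2.1]
  · rw [h3]; linarith [h2.2]

lemma test_mul_continuous {φ F : ℂ → ℂ} (h : Test φ) (hF : Sm F) {τ : ℂ} (hτ : 1 ≤ τ.im) :
    Continuous (fun z => φ z * F (τ + z)) := by
  refine continuous_of_tsupport fun z hz => ?_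
  have hz' := h.2 (tsupport_mul_subset_left hz)
  have h1 : ContinuousAt F (τ + z) := hF.contAt (ball_mem_UHP hτ hz').1
  have h2 : ContinuousAt (fun z => F (τ + z)) z :=
    ContinuousAt.comp (g := F) (f := fun z => τ + z) h1 (by fun_prop)
  exact h.1.continuous.continuousAt.mul h2

lemma test_mul_integrable {φ F : ℂ → ℂ} (h : Test φ) (hF : Sm F) {τ : ℂ} (hτ : 1 ≤ τ.im) :
    Integrable (fun z => φ z * F (τ + z)) :=
  (test_mul_continuous h hF hτ).integrable_of_hasCompactSupport h.hcs.mul_right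

lemma Test.fderivApply {φ : ℂ → ℂ} (h : Test φ) (w : ℂ) : Test (fun z => fderiv ℝ φ z w) := by
  refine ⟨(h.1.fderiv_right (m := (⊤ : ℕ∞)) (by simp)).clm_apply contDiff_const, ?_⟩
  exact (tsupport_fderiv_apply_subset ℝ w).trans h.2

lemma Test.wirt {φ : ℂ → ℂ} (h : Test φ) : Test (wirt φ) := by
  have e : _root_.wirt φ
      = fun z => (fderiv ℝ φ z 1 - Complex.I * fderiv ℝ φ z Complex.I) * (1 / 2) := by
    ext x; simp only [_root_.wirt, pdU, pdV]; ring
  constructor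
  · rw [e]
    exact (((h.fderivApply 1).1.sub
      (contDiff_const.mul (h.fderivApply Complex.I).1))).mul contDiff_const
  · refine closure_minimal ?_ Metric.isClosed_closedBall
    intro z hz
    by_contra hc
    have hz1 : z ∉ tsupport (fun z => fderiv ℝ φ z 1) := fun h' => hc ((h.fderivApply 1).2 h')
    have hz2 : z ∉ tsupport (fun z => fderiv ℝ φ z Complex.I) :=
      fun h' => hc ((h.fderivApply _).2 h')
    apply hz
    have h1 : fderiv ℝ φ z 1 = 0 :=
      image_eq_zero_of_notMem_tsupport (f := fun z => fderiv ℝ φ z 1) hz1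
    have h2 : fderiv ℝ φ z Complex.I = 0 :=
      image_eq_zero_of_notMem_tsupport (f := fun z => fderiv ℝ φ z Complex.I) hz2
    rw [e]; simp [h1, h2]

lemma ibp_fderiv {φ F : ℂ → ℂ} (h : Test φ) (hF : Sm F) {τ : ℂ} (hτ : 1 ≤ τ.im) (w : ℂ) :
    ∫ z, φ z * fderiv ℝ F (τ + z) w = - ∫ z, fderiv ℝ φ z w * F (τ + z) := by
  have := integral_mul_fderiv_eq_neg_fderiv_mul_of_integrable (μ := (volume : Measure ℂ))
    (f := φ) (g := fun z => F (τ + z)) (v := w)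
    (test_mul_integrable (h.fderivApply w) hF hτ)
    (by
      simp only [fderiv_comp_add_left]
      exact test_mul_integrable h (hF.fderivApply w) hτ)
    (test_mul_integrable h hF hτ)
    (fun x _ => h.1.differentiable (by simp) x)
    (fun x hx => by
      have h1 := hF.diffAt (ball_mem_UHP hτ (h.2 hx)).1
      exact DifferentiableAt.comp (g := F) (f := fun z => τ + z) x h1 (by fun_prop))
  simpa only [fderiv_comp_add_left] using this

lemma ibp_wirt {φ F : ℂ → ℂ} (h : Test φ) (hF : Sm F) {τ : ℂ} (hτ : 1 ≤ τ.im) :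
    ∫ z, φ z * wirt F (τ + z) = - ∫ z, wirt φ z * F (τ + z) := by
  have e1 : (fun z => φ z * wirt F (τ + z)) = fun z =>
      (1 / 2) * (φ z * fderiv ℝ F (τ + z) 1)
        - (Complex.I / 2) * (φ z * fderiv ℝ F (τ + z) Complex.I) := by
    ext z; simp only [wirt, pdU, pdV]; ring
  have e2 : (fun z => wirt φ z * F (τ + z)) = fun z =>
      (1 / 2) * (fderiv ℝ φ z 1 * F (τ + z))
        - (Complex.I / 2) * (fderiv ℝ φ z Complex.I * F (τ + z)) := by
    ext z; simp only [wirt, pdU, pdV]; ring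
  rw [e1, e2, integral_sub ((test_mul_integrable h (hF.fderivApply 1) hτ).const_mul _)
    ((test_mul_integrable h (hF.fderivApply Complex.I) hτ).const_mul _),
    integral_sub ((test_mul_integrable (h.fderivApply 1) hF hτ).const_mul _)
    ((test_mul_integrable (h.fderivApply Complex.I) hF hτ).const_mul _),
    integral_const_mul, integral_const_mul, integral_const_mul, integral_const_mul,
    ibp_fderiv h hF hτ, ibp_fderiv h hF hτ]
  ring

lemma smooth_PG_base {F : ℂ → ℂ} (hP : PG F) {φ : ℂ → ℂ} (h : Test φ) :
    PG (fun τ => ∫ z, φ z * F (τ + z)) := by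
  obtain ⟨C, n, v₀, hC, hv, hb⟩ := hP
  refine ⟨(∫ z, ‖φ z‖) * (C * 2 ^ n), n, v₀ + 1, by positivity, by linarith, fun τ hτ => ?_⟩
  have hφi : Integrable φ := h.1.continuous.integrable_of_hasCompactSupport h.hcs
  calc ‖∫ z, φ z * F (τ + z)‖ ≤ ∫ z, ‖φ z‖ * (C * (2 * τ.im) ^ n) := by
        refine norm_integral_le_of_norm_le (hφi.norm.mul_const _) (Eventually.of_forall fun z => ?_)
        by_cases hz : z ∈ tsupport φ
        · obtain ⟨h1, h2, h3⟩ := ball_mem_UHP (τ := τ) (by linarith) (h.2 hz)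
          have hb' := hb (τ + z) (by linarith)
          have h1' : 0 < (τ + z).im := h1
          rw [norm_mul]
          refine mul_le_mul_of_nonneg_left (hb'.trans ?_) (norm_nonneg _)
          refine mul_le_mul_of_nonneg_left ?_ hC
          exact pow_le_pow_left₀ h1'.le (by linarith) _
        · simp [image_eq_zero_of_notMem_tsupport hz]
    _ = _ := by rw [integral_mul_const, mul_pow]; ring

lemma smooth_PG {F : ℂ → ℂ} (hF : Sm F) (hP : PG F) (m : ℕ) :
    ∀ φ : ℂ → ℂ, Test φ → PG (fun τ => ∫ z, φ z * wirt^[m] F (τ + z)) := by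
  induction m with
  | zero => intro φ h; exact smooth_PG_base hP h
  | succ m ih =>
    intro φ h
    refine (ih _ h.wirt).neg.congr fun τ _ hτ => ?_
    simp only [Function.iterate_succ_apply']
    exact ibp_wirt h (hF.wirtIter m) hτ

/-- A radial bump function. -/
def bumpR (z : ℂ) : ℝ := expNegInvGlue (1 - 4 * ‖z‖ ^ 2)

/-- A radial bump function, complex valued. -/
def bumpC (z : ℂ) : ℂ := (bumpR z : ℂ)

lemma bumpR_contDiff : ContDiff ℝ (⊤ : ℕ∞) bumpR :=
  expNegInvGlue.contDiff.comp (contDiff_const.sub (contDiff_const.mul (contDiff_norm_sq ℝ)))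

lemma bumpR_zero {z : ℂ} (hz : 1 / 2 ≤ ‖z‖) : bumpR z = 0 := by
  apply expNegInvGlue.zero_of_nonpos
  nlinarith

lemma bumpR_support : Function.support bumpR ⊆ Metric.closedBall 0 (1 / 2) := by
  intro z hz
  by_contra hc
  apply hz
  apply bumpR_zero
  simp at hc
  linarith

lemma bumpC_test : Test bumpC := by
  refine ⟨Complex.ofRealCLM.contDiff.comp bumpR_contDiff, ?_⟩
  refine closure_minimal ?_ Metric.isClosed_closedBall
  intro z hz
  apply bumpR_support
  intro h
  apply hz
  simp [bumpC, h]

lemma bumpC_integral_ne : ∫ z, bumpC z ≠ 0 := by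
  have h : 0 < ∫ z, bumpR z :=
    bumpR_contDiff.continuous.integral_pos_of_hasCompactSupport_nonneg_nonzero (x := 0)
      (HasCompactSupport.of_support_subset_isCompact (isCompact_closedBall 0 (1 / 2))
        bumpR_support) (fun z => expNegInvGlue.nonneg _)
      (expNegInvGlue.pos_of_pos (by simp)).ne'
  have e : ∫ z, bumpC z = ((∫ z, bumpR z : ℝ) : ℂ) := integral_ofReal
  rw [e]
  exact_mod_cast h.ne'

lemma circle_mean {h : ℂ → ℂ} (hh : DifferentiableOn ℂ h UHP) {τ : ℂ} (hτ : 1 ≤ τ.im)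
    {r : ℝ} (hr0 : 0 < r) (hr : r ≤ 1 / 2) :
    ∫ θ in Ioo (-Real.pi) Real.pi, h (circleMap τ r θ) = 2 * Real.pi * h τ := by
  have hsub : Metric.closedBall τ |r| ⊆ UHP := by
    intro z hz
    rw [abs_of_pos hr0] at hz
    have := (ball_mem_UHP hτ (z := z - τ) (by
      have : ‖z - τ‖ ≤ r := by simpa [dist_eq_norm] using hz
      simpa using this.trans hr)).1
    simpa using this
  have h1 : Real.circleAverage h τ r = h τ := by
    apply circleAverage_of_differentiable_on_off_countable (s := ∅) countable_empty
    · exact hh.continuousOn.mono hsub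
    · intro z hz
      have hz' := hsub (Metric.ball_subset_closedBall hz.1)
      exact (hh z hz').differentiableAt (UHP_nhds hz')
  have hper : Function.Periodic (fun θ => h (circleMap τ r θ)) (2 * Real.pi) := by
    intro θ
    simp only [(periodic_circleMap τ r) θ]
  have h2 := hper.intervalIntegral_add_eq (-Real.pi) 0
  have e : -Real.pi + 2 * Real.pi = Real.pi := by ring
  rw [e, zero_add] at h2
  rw [← integral_Ioc_eq_integral_Ioo, ← intervalIntegral.integral_of_le
    (by linarith [Real.pi_pos]), h2, ← h1, Real.circleAverage_def]
  simp only [Complex.real_smul]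
  push_cast
  have : (Real.pi : ℂ) ≠ 0 := by exact_mod_cast Real.pi_ne_zero
  field_simp

lemma bump_mean_aux {h : ℂ → ℂ} (hh : DifferentiableOn ℂ h UHP) {τ : ℂ} (hτ : 1 ≤ τ.im) :
    ∫ z, bumpC z * h (τ + z)
      = (∫ r in Ioi (0 : ℝ), (r : ℂ) * bumpC r * (2 * Real.pi)) * h τ := by
  have hcont := test_mul_continuous bumpC_test (Sm.ofHol hh) hτ
  rw [← Complex.integral_comp_polarCoord_symm]
  have hG : Continuous (fun p : ℝ × ℝ => p.1 • (bumpC (Complex.polarCoord.symm p)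
      * h (τ + Complex.polarCoord.symm p))) := by
    refine continuous_fst.smul (hcont.comp (g := fun z => bumpC z * h (τ + z)) ?_)
    have e : (fun p : ℝ × ℝ => Complex.polarCoord.symm p)
        = fun p : ℝ × ℝ => (p.1 : ℂ) * (Real.cos p.2 + Real.sin p.2 * Complex.I) := by
      ext p; exact Complex.polarCoord_symm_apply p
    change Continuous (fun p : ℝ × ℝ => Complex.polarCoord.symm p)
    rw [e]
    fun_prop
  have hnorm : ∀ p : ℝ × ℝ, bumpC (Complex.polarCoord.symm p) = bumpC p.1 := by
    intro p
    simp only [bumpC, bumpR, Complex.norm_polarCoord_symm, Complex.norm_real, Real.norm_eq_abs]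
  have hz : ∀ r : ℝ, 1 / 2 ≤ r → bumpC r = 0 := by
    intro r hr
    have : bumpR (r : ℂ) = 0 := bumpR_zero (by
      rw [Complex.norm_real]; exact hr.trans (le_abs_self r))
    simp [bumpC, this]
  have ht : polarCoord.target = Ioi (0 : ℝ) ×ˢ Ioo (-Real.pi) Real.pi := rfl
  rw [ht, Measure.volume_eq_prod, setIntegral_prod]
  · rw [← integral_mul_const]
    refine setIntegral_congr_fun measurableSet_Ioi fun r hr => ?_
    have hr' : 0 < r := hr
    simp only [hnorm]
    rcases le_total r (1 / 2) with h1 | h1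
    · have e : ∀ θ : ℝ, τ + Complex.polarCoord.symm (r, θ) = circleMap τ r θ := by
        intro θ
        simp [circleMap, Complex.exp_mul_I]
      simp only [e]
      rw [integral_smul, integral_const_mul, circle_mean hh hτ hr' h1]
      simp only [Complex.real_smul]
      ring
    · simp [hz r h1]
  · refine IntegrableOn.of_forall_sdiff_eq_zero
      (s := Icc (0 : ℝ) (1 / 2) ×ˢ Icc (-Real.pi) Real.pi) ?_ ?_ ?_
    · exact hG.continuousOn.integrableOn_compact (isCompact_Icc.prod isCompact_Icc)
    · exact measurableSet_Ioi.prod measurableSet_Ioo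
    · rintro ⟨r, θ⟩ ⟨⟨h1, h2⟩, h3⟩
      have h1' : 0 < r := h1
      have h2' : θ ∈ Ioo (-Real.pi) Real.pi := h2
      simp only [hnorm]
      have : 1 / 2 ≤ r := by
        by_contra hc
        exact h3 ⟨⟨h1'.le, (not_le.1 hc).le⟩, ⟨h2'.1.le, h2'.2.le⟩⟩
      simp [hz r this]

lemma bump_mean {h : ℂ → ℂ} (hh : DifferentiableOn ℂ h UHP) {τ : ℂ} (hτ : 1 ≤ τ.im) :
    ∫ z, bumpC z * h (τ + z) = (∫ z, bumpC z) * h τ := by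
  have h1 := bump_mean_aux (h := fun _ => 1) (differentiableOn_const 1) hτ
  simp only [mul_one] at h1
  rw [h1, bump_mean_aux hh hτ]

/-- A holomorphic function which is a derivative of functions of polynomial growth has
polynomial growth. -/
lemma hol_PG {h F₁ F₂ : ℂ → ℂ} (m : ℕ) (hh : DifferentiableOn ℂ h UHP) (s₁ : Sm F₁) (s₂ : Sm F₂)
    (p₁ : PG F₁) (p₂ : PG F₂) (he : ∀ τ ∈ UHP, h τ = wirt^[m] F₁ τ + F₂ τ) : PG h := by
  have key := (PG.const (∫ z, bumpC z)⁻¹).mul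
    ((smooth_PG s₁ p₁ m _ bumpC_test).add (smooth_PG s₂ p₂ 0 _ bumpC_test))
  refine key.congr fun τ _ hτ => ?_
  have e : ∀ z, bumpC z * h (τ + z)
      = bumpC z * wirt^[m] F₁ (τ + z) + bumpC z * F₂ (τ + z) := by
    intro z
    by_cases hz : z ∈ tsupport bumpC
    · rw [he _ (ball_mem_UHP hτ (bumpC_test.2 hz)).1]; ring
    · simp [image_eq_zero_of_notMem_tsupport hz]
  have h2 := bump_mean hh hτ
  simp only [e] at h2
  rw [integral_add (test_mul_integrable bumpC_test (s₁.wirtIter m) hτ)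
    (test_mul_integrable bumpC_test s₂ hτ)] at h2
  simp only [Function.iterate_zero, id]
  rw [h2, inv_mul_cancel_left₀ bumpC_integral_ne]

lemma slash_hol {a b c d : ℤ} (had : a * d - b * c = 1) {g : ℂ → ℂ}
    (hg : DifferentiableOn ℂ g UHP) (κ : ℤ) :
    DifferentiableOn ℂ (slash κ a b c d g) UHP := by
  have h1 : DifferentiableOn ℂ (fun τ => (jf c d τ) ^ (-κ) * g (mob a b c d τ)) UHP := by
    intro τ hτ
    have hgd : DifferentiableAt ℂ g (mob a b c d τ) :=
      (hg _ (mob_mem had hτ)).differentiableAt (UHP_nhds (mob_mem had hτ))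
    exact ((jf_zpow_hasDerivAt had hτ (-κ)).differentiableAt.mul
      (hgd.comp τ (mob_hasDerivAt had hτ).differentiableAt)).differentiableWithinAt
  exact h1.congr fun τ hτ => slash_eq had hτ κ g

lemma add_nat_mem {τ : ℂ} (N : ℕ) : τ + (N : ℂ) ∈ UHP ↔ τ ∈ UHP := by
  simp [UHP]

lemma slash_periodic {a b c d : ℤ} (had : a * d - b * c = 1) {g : ℂ → ℂ} {κ : ℤ} {N : ℕ}
    {χ : DirichletCharacter ℂ N} (hg : SlashInv κ N χ g) {τ : ℂ} (hτ : τ ∈ UHP) :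
    slash κ a b c d g (τ + N) = slash κ a b c d g τ := by
  have hτN : τ + (N : ℂ) ∈ UHP := (add_nat_mem N).2 hτ
  have had' : (a : ℂ) * d - b * c = 1 := by exact_mod_cast had
  have hj := jf_ne had hτ
  have hj' := jf_ne had hτN
  have hM : (1 - a * c * N) * (1 + a * c * N) - (a ^ 2 * N) * (-(c ^ 2 * N)) = (1 : ℤ) := by ring
  have hw := mob_mem had hτ
  have h := hg (1 - a * c * N) (a ^ 2 * N) (-(c ^ 2 * N)) (1 + a * c * N) hM
    ⟨-c ^ 2, by ring⟩ _ hw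
  rw [slash_eq hM hw] at h
  have hχ : χ ((1 + a * c * N : ℤ) : ZMod N) = 1 := by
    push_cast
    rw [ZMod.natCast_self, mul_zero, add_zero, map_one]
  have hjj : jf (-(c ^ 2 * N)) (1 + a * c * N) (mob a b c d τ)
      = jf c d (τ + N) / jf c d τ := by
    have hne : (c : ℂ) * τ + d ≠ 0 := hj
    simp only [jf, mob]
    push_cast
    field_simp
    linear_combination (c : ℂ) * N * had'
  have hmm : mob (1 - a * c * N) (a ^ 2 * N) (-(c ^ 2 * N)) (1 + a * c * N) (mob a b c d τ)
      = mob a b c d (τ + N) := by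
    have e1 : mob (1 - a * c * N) (a ^ 2 * N) (-(c ^ 2 * N)) (1 + a * c * N) (mob a b c d τ)
        = (((1 - a * c * N : ℤ) : ℂ) * mob a b c d τ + ((a ^ 2 * N : ℤ) : ℂ))
          / jf (-(c ^ 2 * N)) (1 + a * c * N) (mob a b c d τ) := rfl
    have e2 : mob a b c d (τ + N) = ((a : ℂ) * (τ + N) + b) / jf c d (τ + N) := rfl
    have e3 : ((1 - a * c * N : ℤ) : ℂ) * mob a b c d τ + ((a ^ 2 * N : ℤ) : ℂ)
        = ((a : ℂ) * (τ + N) + b) / jf c d τ := by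
      have hne : (c : ℂ) * τ + d ≠ 0 := hj
      simp only [jf, mob]
      push_cast
      field_simp
      linear_combination (a : ℂ) * N * had'
    rw [e1, e2, e3, hjj]
    field_simp
  rw [hχ, hmm, hjj, one_mul] at h
  rw [slash_eq had hτN, slash_eq had hτ, ← h, div_zpow]
  have := zpow_ne_zero (-κ) hj
  field_simp

lemma bdd_of_PG {κ : ℤ} {N : ℕ} (hN : 1 ≤ N) {χ : DirichletCharacter ℂ N} {g : ℂ → ℂ}
    (hg : DifferentiableOn ℂ g UHP) (hs : SlashInv κ N χ g)
    (hp : ∀ a b c d : ℤ, a * d - b * c = 1 → PG (slash κ a b c d g)) :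
    BoundedAtCusps κ g := by
  classical
  intro a b c d had
  have hN0 : (0 : ℝ) < N := by exact_mod_cast hN
  have hNc : (N : ℂ) ≠ 0 := by exact_mod_cast hN0.ne'
  set G := slash κ (a : ℂ) b c d g with hGdef
  have hG : DifferentiableOn ℂ G UHP := slash_hol had hg κ
  obtain ⟨C, n, v₀, hC, hv, hb⟩ := hp a b c d had
  let E : ℂ → ℂ := fun τ => Complex.exp (2 * Real.pi * Complex.I * τ / N)
  have hE : ∀ τ, ‖E τ‖ = Real.exp (-(2 * Real.pi / N * τ.im)) := by
    intro τ
    have : (2 * Real.pi * Complex.I * τ / N) = ((2 * Real.pi / N : ℝ) : ℂ) * (Complex.I * τ) := by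
      push_cast; field_simp
    simp only [E, Complex.norm_exp]
    rw [this, Complex.re_ofReal_mul]
    simp
  let P : ℂ → ℂ := fun τ => if τ ∈ UHP then G τ * E τ else 0
  have hPper : Function.Periodic P ((N : ℝ) : ℂ) := by
    intro τ
    simp only [P, Complex.ofReal_natCast, add_nat_mem]
    split_ifs with h
    · rw [hGdef, slash_periodic had hs h]
      congr 1
      simp only [E]
      rw [Complex.exp_eq_exp_iff_exists_int]
      exact ⟨1, by push_cast; field_simp⟩
    · rfl
  have hev : ∀ᶠ z in comap Complex.im atTop, z ∈ UHP :=
    (eventually_gt_atTop (0 : ℝ)).comap _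
  have hhol : ∀ᶠ z in comap Complex.im atTop, DifferentiableAt ℂ P z := by
    filter_upwards [hev] with z hz
    have h1 : P =ᶠ[nhds z] fun τ => G τ * E τ := by
      filter_upwards [UHP_nhds hz] with w hw
      simp [P, hw]
    refine DifferentiableAt.congr_of_eventuallyEq ?_ h1
    refine ((hG z hz).differentiableAt (UHP_nhds hz)).mul ?_
    simp only [E]
    fun_prop
  have hzero : ZeroAtFilter (comap Complex.im atTop) P := by
    have hc : (0 : ℝ) < 2 * Real.pi / N := by positivity
    have ht : Tendsto (fun v : ℝ => C * (v ^ n * Real.exp (-(2 * Real.pi / N * v)))) atTop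
        (nhds 0) := by
      have := (Real.tendsto_pow_mul_exp_neg_atTop_nhds_zero n).comp
        (tendsto_id.const_mul_atTop hc)
      have h2 := this.const_mul (C * ((2 * Real.pi / N) ^ n)⁻¹)
      rw [mul_zero] at h2
      refine h2.congr fun v => ?_
      have : (2 * Real.pi / N) ^ n ≠ 0 := (pow_pos hc n).ne'
      simp only [Function.comp, id, mul_pow]
      field_simp
    refine squeeze_zero_norm' ?_ (ht.comp tendsto_comap)
    filter_upwards [hev, (eventually_ge_atTop v₀).comap Complex.im] with z hz hz2
    simp only [P, hz, if_true, norm_mul, hE, Function.comp]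
    rw [← mul_assoc]
    exact mul_le_mul_of_nonneg_right (hb z hz2) (Real.exp_pos _).le
  have hO := Function.Periodic.exp_decay_of_zero_at_inf hN0 hPper hhol hzero
  obtain ⟨C', hC'⟩ := hO.bound
  rw [eventually_comap] at hC'
  obtain ⟨v₁, hv₁⟩ := eventually_atTop.1 hC'
  refine ⟨C', v₁, fun τ hτ hτv => ?_⟩
  have h := hv₁ _ hτv τ rfl
  simp only [P, hτ, if_true, norm_mul, hE, Real.norm_eq_abs, Real.abs_exp] at h
  have e : -2 * Real.pi * τ.im / N = -(2 * Real.pi / N * τ.im) := by ring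
  rw [e] at h
  exact le_of_mul_le_mul_right h (Real.exp_pos _)

lemma PG_of_rpow {F : ℂ → ℂ} (h : ∃ A C v₀ : ℝ, ∀ τ ∈ UHP, v₀ ≤ τ.im → ‖F τ‖ ≤ C * τ.im ^ A) :
    PG F := by
  obtain ⟨A, C, v₀, hb⟩ := h
  refine ⟨|C|, ⌈|A|⌉₊, max v₀ 1, abs_nonneg _, le_max_right _ _, fun τ hτ => ?_⟩
  have h1 : 1 ≤ τ.im := (le_max_right _ _).trans hτ
  have h0 : 0 < τ.im := by linarith
  refine (hb τ h0 ((le_max_left _ _).trans hτ)).trans ?_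
  refine mul_le_mul (le_abs_self C) ?_ (Real.rpow_nonneg h0.le _) (abs_nonneg _)
  rw [← Real.rpow_natCast]
  exact Real.rpow_le_rpow_of_exponent_le h1 ((le_abs_self A).trans (Nat.le_ceil _))

lemma wirtIter_cmul {F : ℂ → ℂ} (hF : Sm F) (c : ℂ) (n : ℕ) :
    ∀ τ ∈ UHP, wirt^[n] (fun z => c * F z) τ = c * wirt^[n] F τ := by
  induction n with
  | zero => intro τ _; rfl
  | succ n ih =>
    intro τ hτ
    simp only [Function.iterate_succ_apply']
    rw [wirt_congr ih τ hτ, wirt_cmul c ((hF.wirtIter n).diffAt hτ)]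

lemma xi_modular {k : ℤ} {N : ℕ} (hN : 1 ≤ N) {χ : DirichletCharacter ℂ N} {f : ℂ → ℂ}
    (hF : Sm f) (hs : SlashInv k N χ f) (hL : ∀ τ ∈ UHP, hypLaplacian k f τ = 0)
    (hp : PolyGrowthAtCusps k f) :
    IsHolomorphicModularForm (2 - k) N (conjChar χ) (xiOp k f) := by
  have hhol := xi_hol hF k hL
  have hinv : SlashInv (2 - k) N (conjChar χ) (xiOp k f) := by
    intro a b c d had hc τ hτ
    rw [← xi_slash had hF k hτ]
    simp only [xiOp]
    rw [wirtBar_congr (hs a b c d had hc) τ hτ, wirtBar_cmul _ (hF.diffAt hτ)]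
    simp only [conjChar, MulChar.ringHomComp_apply, map_mul]
    ring
  refine ⟨hhol, hinv, bdd_of_PG hN hhol hinv fun a b c d had => ?_⟩
  have hS : Sm (slash k a b c d f) := hF.slash had k
  have hP : PG (slash k a b c d f) := PG_of_rpow (hp a b c d had)
  refine hol_PG (F₁ := fun τ => (2 * Complex.I * (τ.im : ℂ) ^ k)
      * (starRingEnd ℂ) (slash k a b c d f τ))
    (F₂ := fun τ => (-(k : ℂ) * (τ.im : ℂ) ^ (k - 1)) * (starRingEnd ℂ) (slash k a b c d f τ))
    1 (slash_hol had hhol _) (((Sm.const _).mul (Sm.imZpow k)).mul hS.conj)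
    (((Sm.const _).mul (Sm.imZpow (k - 1))).mul hS.conj)
    (((PG.const _).mul (PG.imZpow k)).mul hP.conj)
    (((PG.const _).mul (PG.imZpow (k - 1))).mul hP.conj) fun τ hτ => ?_
  rw [← xi_slash had hF k hτ]
  simp only [Function.iterate_one]
  rw [wirt_mul (((Sm.const _).mul (Sm.imZpow k)).diffAt hτ) (hS.conj.diffAt hτ),
    wirt_cmul _ ((Sm.imZpow k).diffAt hτ), wirt_im_zpow k hτ, wirt_conj (hS.diffAt hτ)]
  simp only [xiOp]
  linear_combination ((k : ℂ) * (τ.im : ℂ) ^ (k - 1)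
    * (starRingEnd ℂ) (slash k a b c d f τ)) * Complex.I_sq

lemma bol_slash {a b c d : ℤ} (had : a * d - b * c = 1) {f : ℂ → ℂ} (hF : Sm f) (n : ℕ) :
    ∀ τ ∈ UHP, slash (2 + n) a b c d (wirt^[n + 1] f) τ
      = wirt^[n + 1] (slash (-(n : ℤ)) a b c d f) τ := by
  intro τ hτ
  rw [slash_eq had hτ, wirtIter_congr (fun z hz => slash_eq had hz (-(n : ℤ)) f) _ τ hτ]
  simp only [neg_neg]
  rw [bol had hF n τ hτ]
  congr 2
  ring

lemma slash_cmul (k : ℤ) (a b c d : ℂ) (e : ℂ) (F : ℂ → ℂ) (τ : ℂ) :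
    slash k a b c d (fun z => e * F z) τ = e * slash k a b c d F τ := by
  simp only [slash]; ring

lemma wirtIter_modular {n : ℕ} {N : ℕ} (hN : 1 ≤ N) {χ : DirichletCharacter ℂ N} {f : ℂ → ℂ}
    (hF : Sm f) (hs : SlashInv (-(n : ℤ)) N χ f)
    (hL : ∀ τ ∈ UHP, hypLaplacian (-(n : ℤ)) f τ = 0)
    (hp : PolyGrowthAtCusps (-(n : ℤ)) f) :
    IsHolomorphicModularForm (2 + n) N χ (wirt^[n + 1] f) := by
  have hhol := bol_hol hF n hL
  have hinv : SlashInv (2 + n) N χ (wirt^[n + 1] f) := by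
    intro a b c d had hc τ hτ
    rw [bol_slash had hF n τ hτ, wirtIter_congr (hs a b c d had hc) _ τ hτ,
      wirtIter_cmul hF _ _ τ hτ]
  refine ⟨hhol, hinv, bdd_of_PG hN hhol hinv fun a b c d had => ?_⟩
  refine hol_PG (F₁ := slash (-(n : ℤ)) a b c d f) (F₂ := fun _ => 0)
    (n + 1) (slash_hol had hhol _) (hF.slash had _) (Sm.const 0)
    (PG_of_rpow (hp a b c d had)) (PG.const 0) fun τ hτ => ?_
  rw [bol_slash had hF n τ hτ, add_zero]

lemma modular_congr_cmul {κ : ℤ} {N : ℕ} {χ : DirichletCharacter ℂ N} {g h : ℂ → ℂ} (e : ℂ)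
    (hg : IsHolomorphicModularForm κ N χ g) (he : ∀ τ ∈ UHP, h τ = e * g τ) :
    IsHolomorphicModularForm κ N χ h := by
  obtain ⟨h1, h2, h3⟩ := hg
  have hsl : ∀ a b c d : ℤ, a * d - b * c = 1 → ∀ τ ∈ UHP,
      slash κ a b c d h τ = e * slash κ a b c d g τ := by
    intro a b c d had τ hτ
    rw [slash_eq had hτ, slash_eq had hτ, he _ (mob_mem had hτ)]
    ring
  refine ⟨(h1.const_mul e).congr he, ?_, ?_⟩
  · intro a b c d had hc τ hτ
    rw [hsl a b c d had τ hτ, h2 a b c d had hc τ hτ, he τ hτ]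
    ring
  · intro a b c d had
    obtain ⟨C, v₀, hb⟩ := h3 a b c d had
    refine ⟨‖e‖ * C, v₀, fun τ hτ hv => ?_⟩
    rw [hsl a b c d had τ hτ, norm_mul]
    exact mul_le_mul_of_nonneg_left (hb τ hτ hv) (norm_nonneg e)

/-- **Shadow and Bol operators send `H^#` to holomorphic modular forms**
(Proposition 3.1 (ii),(iii)): for `f ∈ H^#_k(N,χ)` with `k ≠ 1`,
`ξ_k(f) ∈ M_{2-k}(N,χ̄)`, and if `k ≤ 0` then `D^{1-k}(f) ∈ M_{2-k}(N,χ)`. -/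
theorem shadow_and_bol_to_modular
    (k : ℤ) (hk : k ≠ 1) (N : ℕ) (hN : 1 ≤ N)
    (χ : DirichletCharacter ℂ N) (f : ℂ → ℂ)
    (hf : IsHMFPolyGrowth k N χ f) :
    IsHolomorphicModularForm (2 - k) N (conjChar χ) (fun τ => xiOp k f τ) ∧
      (k ≤ 0 → IsHolomorphicModularForm (2 - k) N χ (Dop^[(1 - k).toNat] f)) := by
  obtain ⟨⟨hF, hs, hL, _⟩, hp⟩ := hf
  refine ⟨xi_modular hN hF hs hL hp, fun hk0 => ?_⟩
  obtain ⟨n, rfl⟩ : ∃ n : ℕ, k = -(n : ℤ) := ⟨(-k).toNat, by omega⟩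
  have e1 : (1 - -(n : ℤ)).toNat = n + 1 := by omega
  have e2 : 2 - -(n : ℤ) = 2 + n := by ring
  rw [e1, e2]
  exact modular_congr_cmul _ (wirtIter_modular hN hF hs hL hp) (Dop_iter hF (n + 1))
end
end

section
/- Analyticity and Mellin inversion for W_ν. For any real ν > 0, the function W_ν(s) = ∫₀^∞ Γ(ν,2x) e^{x} x^{s−1} dx is an analytic function of s on the half-plane Re(s) > 0. Moreover, for any x > 0 and σ > 0, the Mellin inversion formula holds: Γ(ν,2x) e^{x} = (1/(2πi)) ∫_{σ−i∞}^{σ+i∞} x^{−s} W_ν(s) ds. -/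
open Complex MeasureTheory Set Filter

noncomputable section

lemma aux_integrableOn_exp (ν c : ℝ) (hν : 0 < ν) (hc : 0 < c) :
    IntegrableOn (fun t : ℝ => Real.exp (-(c * t)) * t ^ (ν - 1)) (Ioi 0) := by
  have h := integrableOn_rpow_mul_exp_neg_mul_rpow (p := 1) (s := ν - 1) (b := c)
    (by linarith) one_pos hc
  refine h.congr_fun (fun t ht => ?_) measurableSet_Ioi
  simp only [Real.rpow_one, neg_mul]
  rw [mul_comm]

lemma aux_integrableOn (ν : ℝ) (hν : 0 < ν) :
    IntegrableOn (fun t : ℝ => Real.exp (-t) * t ^ (ν - 1)) (Ioi 0) := by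
  simpa using aux_integrableOn_exp ν 1 hν one_pos

/-- The function whose Mellin transform is `W_ν`. -/
def auxF (ν : ℝ) (x : ℝ) : ℝ := incGamma ν (2 * x) * Real.exp x

lemma auxF_nonneg (ν x : ℝ) (hx : 0 ≤ x) : 0 ≤ auxF ν x := by
  unfold auxF incGamma
  refine mul_nonneg (setIntegral_nonneg measurableSet_Ioi fun t ht => ?_) (Real.exp_pos _).le
  have : 0 < t := lt_of_le_of_lt (by linarith) ht
  positivity

lemma auxF_bound (ν : ℝ) (hν : 0 < ν) :
    ∃ C : ℝ, 0 ≤ C ∧ ∀ x : ℝ, 0 ≤ x → auxF ν x ≤ C * Real.exp (-(1/2) * x) := by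
  have hI := aux_integrableOn_exp ν (1/4) hν (by norm_num)
  refine ⟨∫ t in Ioi (0:ℝ), Real.exp (-(1/4 * t)) * t ^ (ν - 1), ?_, fun x hx => ?_⟩
  · refine setIntegral_nonneg measurableSet_Ioi fun t ht => ?_
    have : 0 < t := ht
    positivity
  have hsub : Ioi (2 * x) ⊆ Ioi (0:ℝ) := Ioi_subset_Ioi (by linarith)
  have h1 : incGamma ν (2 * x) ≤
      ∫ t in Ioi (2 * x), Real.exp (-(3/2) * x) * (Real.exp (-(1/4 * t)) * t ^ (ν - 1)) := by
    refine setIntegral_mono_on ((aux_integrableOn ν hν).mono_set hsub)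
      ((hI.mono_set hsub).const_mul _) measurableSet_Ioi fun t ht => ?_
    have h0 : 0 < t := hsub ht
    have h2 : 2 * x < t := ht
    rw [← mul_assoc, ← Real.exp_add]
    gcongr
    linarith
  rw [integral_const_mul] at h1
  have h3 : ∫ t in Ioi (2 * x), Real.exp (-(1/4 * t)) * t ^ (ν - 1) ≤
      ∫ t in Ioi (0:ℝ), Real.exp (-(1/4 * t)) * t ^ (ν - 1) := by
    refine setIntegral_mono_set hI ?_ hsub.eventuallyLE
    rw [EventuallyLE, ae_restrict_iff' measurableSet_Ioi]
    refine ae_of_all _ fun t ht => ?_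
    have : 0 < t := ht
    simp only [Pi.zero_apply]
    positivity
  unfold auxF
  calc incGamma ν (2 * x) * Real.exp x
      ≤ (Real.exp (-(3/2) * x) *
        ∫ t in Ioi (0:ℝ), Real.exp (-(1/4 * t)) * t ^ (ν - 1)) * Real.exp x := by
        gcongr
        exact h1.trans (by gcongr)
    _ = _ := by
        rw [mul_comm (Real.exp _), mul_assoc, ← Real.exp_add]
        ring_nf

lemma incGamma_hasDerivAt (ν : ℝ) (hν : 0 < ν) (x : ℝ) (hx : 0 < x) :
    HasDerivAt (incGamma ν) (-(Real.exp (-x) * x ^ (ν - 1))) x := by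
  have hI := aux_integrableOn ν hν
  have hc : ContinuousOn (fun t : ℝ => Real.exp (-t) * t ^ (ν - 1)) (Ioi 0) := by
    intro t ht
    have : t ≠ 0 := ne_of_gt ht
    exact ((by fun_prop : ContinuousAt (fun t : ℝ => Real.exp (-t)) t).mul
      (Real.continuousAt_rpow_const _ _ (Or.inl this))).continuousWithinAt
  have h1 : HasDerivAt (fun u => ∫ t in (0:ℝ)..u, Real.exp (-t) * t ^ (ν - 1))
      (Real.exp (-x) * x ^ (ν - 1)) x := by
    refine intervalIntegral.integral_hasDerivAt_right ?_ ?_ ?_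
    · rw [intervalIntegrable_iff_integrableOn_Ioc_of_le hx.le]
      exact hI.mono_set Ioc_subset_Ioi_self
    · exact hc.stronglyMeasurableAtFilter isOpen_Ioi x hx
    · exact hc.continuousAt (Ioi_mem_nhds hx)
  have h2 := h1.const_sub (incGamma ν 0)
  refine h2.congr_of_eventuallyEq ?_
  filter_upwards [Ioi_mem_nhds hx] with u hu
  rw [← intervalIntegral.integral_Ioi_sub_Ioi hI (le_of_lt hu)]
  simp [incGamma]

lemma auxF_hasDerivAt (ν : ℝ) (hν : 0 < ν) (x : ℝ) (hx : 0 < x) :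
    HasDerivAt (auxF ν) (auxF ν x - 2 ^ ν * (x ^ (ν - 1) * Real.exp (-x))) x := by
  have h1 := (incGamma_hasDerivAt ν hν (2 * x) (by linarith)).comp x
    ((hasDerivAt_id x).const_mul 2)
  have h2 := h1.mul (Real.hasDerivAt_exp x)
  unfold auxF
  refine h2.congr_deriv ?_
  simp only [Function.comp_apply]
  have e1 : (2:ℝ) ^ ν = 2 ^ (ν - 1) * 2 := by
    rw [Real.rpow_sub_one (by norm_num)]; ring
  have e2 : Real.exp (-(2 * x)) * Real.exp x = Real.exp (-x) := by
    rw [← Real.exp_add]; ring_nf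
  rw [Real.mul_rpow (by norm_num) hx.le, e1, ← e2]
  ring

lemma Wnu_eq_mellin (ν : ℝ) (s : ℂ) : Wnu ν s = mellin (fun x => (auxF ν x : ℂ)) s := by
  unfold Wnu mellin auxF
  refine integral_congr_ae (ae_of_all _ fun x => ?_)
  simp only [smul_eq_mul]
  rw [mul_comm]

lemma auxF_cont (ν : ℝ) (hν : 0 < ν) : ContinuousOn (fun x => (auxF ν x : ℂ)) (Ioi 0) :=
  fun x hx => (continuous_ofReal.continuousAt.comp
    (auxF_hasDerivAt ν hν x hx).continuousAt).continuousWithinAt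

lemma auxF_top (ν : ℝ) (hν : 0 < ν) :
    (fun x => (auxF ν x : ℂ)) =O[atTop] fun x : ℝ => Real.exp (-(1/2) * x) := by
  obtain ⟨C, hC, h⟩ := auxF_bound ν hν
  refine Asymptotics.IsBigO.of_bound C ?_
  filter_upwards [eventually_ge_atTop 0] with x hx
  rw [Complex.norm_of_nonneg (auxF_nonneg ν x hx), Real.norm_of_nonneg (Real.exp_pos _).le]
  exact h x hx

lemma auxF_zero (ν : ℝ) (hν : 0 < ν) :
    (fun x => (auxF ν x : ℂ)) =O[nhdsWithin 0 (Ioi 0)] fun x : ℝ => x ^ (-(0:ℝ)) := by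
  obtain ⟨C, hC, h⟩ := auxF_bound ν hν
  refine Asymptotics.IsBigO.of_bound C ?_
  filter_upwards [self_mem_nhdsWithin] with x hx
  have hx0 : 0 < x := hx
  rw [Complex.norm_of_nonneg (auxF_nonneg ν x hx0.le)]
  simp only [neg_zero, Real.rpow_zero, norm_one]
  refine (h x hx0.le).trans ?_
  gcongr
  exact Real.exp_le_one_iff.mpr (by linarith)

lemma auxF_conv (ν : ℝ) (hν : 0 < ν) (s : ℂ) (hs : 0 < s.re) :
    MellinConvergent (fun x => (auxF ν x : ℂ)) s :=
  mellinConvergent_of_isBigO_rpow_exp (a := 1/2) (by norm_num)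
    ((auxF_cont ν hν).locallyIntegrableOn measurableSet_Ioi) (auxF_top ν hν) (auxF_zero ν hν) hs

lemma Wnu_diff (ν : ℝ) (hν : 0 < ν) (s : ℂ) (hs : 0 < s.re) :
    DifferentiableAt ℂ (Wnu ν) s := by
  rw [funext (Wnu_eq_mellin ν)]
  exact mellin_differentiableAt_of_isBigO_rpow_exp (a := 1/2) (by norm_num)
    ((auxF_cont ν hν).locallyIntegrableOn measurableSet_Ioi) (auxF_top ν hν) (auxF_zero ν hν) hs

lemma Wnu_feq (ν : ℝ) (hν : 0 < ν) (s : ℂ) (hs : 0 < s.re) :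
    s * Wnu ν s = (2:ℂ) ^ (ν:ℂ) * Complex.Gamma (s + ν) - Wnu ν (s + 1) := by
  have hs0 : s ≠ 0 := by rintro rfl; simp at hs
  obtain ⟨C, hC, hb⟩ := auxF_bound ν hν
  have hnorm : ∀ x : ℝ, 0 ≤ x →
      ‖(x:ℂ) ^ s * (auxF ν x : ℂ)‖ ≤ C * (x ^ s.re * Real.exp (-(1/2) * x)) := by
    intro x hx
    rw [norm_mul, Complex.norm_of_nonneg (auxF_nonneg ν x hx),
      Complex.norm_cpow_eq_rpow_re_of_nonneg hx hs.ne']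
    calc x ^ s.re * auxF ν x ≤ x ^ s.re * (C * Real.exp (-(1/2) * x)) := by
          gcongr; exact hb x hx
      _ = _ := by ring
  have hsn : 0 < (s + ν).re := by simp; linarith
  have i1 : IntegrableOn (fun x : ℝ => (x:ℂ) ^ (s - 1) • (auxF ν x : ℂ)) (Ioi 0) :=
    auxF_conv ν hν s hs
  have i2 : IntegrableOn (fun x : ℝ => (x:ℂ) ^ (s + 1 - 1) • (auxF ν x : ℂ)) (Ioi 0) :=
    auxF_conv ν hν (s + 1) (by simp; linarith)
  have i3 := Complex.GammaIntegral_convergent hsn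
  have iA := ((i1.const_mul s).add i2).sub (i3.const_mul ((2:ℂ) ^ (ν:ℂ)))
  have key := integral_Ioi_of_hasDerivAt_of_tendsto (a := 0) (m := 0)
    (f := fun x : ℝ => (x:ℂ) ^ s * (auxF ν x : ℂ)) ?_ ?_ iA ?_
  · rw [integral_sub' ((i1.const_mul s).add i2) (i3.const_mul ((2:ℂ) ^ (ν:ℂ))),
      integral_add' (i1.const_mul s) i2, integral_const_mul, integral_const_mul] at key
    rw [Wnu_eq_mellin, Wnu_eq_mellin, Complex.Gamma_eq_integral hsn]
    simp only [ofReal_zero, zero_cpow hs0, zero_mul, sub_zero] at key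
    unfold mellin GammaIntegral
    linear_combination key
  · unfold ContinuousWithinAt
    simp only [ofReal_zero, zero_cpow hs0, zero_mul]
    refine squeeze_zero_norm' (a := fun x : ℝ => C * (x ^ s.re * Real.exp (-(1/2) * x))) ?_ ?_
    · filter_upwards [self_mem_nhdsWithin] with x hx using hnorm x hx
    · have : ContinuousAt (fun x : ℝ => C * (x ^ s.re * Real.exp (-(1/2) * x))) 0 := by
        refine continuousAt_const.mul (ContinuousAt.mul ?_ (by fun_prop))
        exact Real.continuousAt_rpow_const _ _ (Or.inr hs.le)
      have h := this.tendsto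
      simp only [Real.zero_rpow hs.ne', zero_mul, mul_zero] at h
      exact h.mono_left nhdsWithin_le_nhds
  · intro x hx
    have hx0 : 0 < x := hx
    have hxc : (x:ℂ) ≠ 0 := ofReal_ne_zero.mpr hx0.ne'
    have d1 : HasDerivAt (fun x : ℝ => (x:ℂ) ^ s) (s * (x:ℂ) ^ (s - 1)) x :=
      hasDerivAt_ofReal_cpow_const hx0.ne' hs0
    have d2 := (auxF_hasDerivAt ν hν x hx0).ofReal_comp
    refine (d1.mul d2).congr_deriv ?_
    have e : (x:ℂ) ^ (s + ν - 1) = (x:ℂ) ^ s * (x:ℂ) ^ ((ν:ℂ) - 1) := by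
      rw [← cpow_add _ _ hxc]; ring_nf
    simp only [Pi.add_apply, Pi.sub_apply, smul_eq_mul, add_sub_cancel_right]
    rw [e]
    push_cast
    rw [ofReal_cpow (by norm_num : (0:ℝ) ≤ 2), ofReal_cpow hx0.le]
    push_cast
    ring
  · refine squeeze_zero_norm' (a := fun x : ℝ => C * (x ^ s.re * Real.exp (-(1/2) * x))) ?_ ?_
    · filter_upwards [eventually_ge_atTop 0] with x hx using hnorm x hx
    · simpa using (tendsto_rpow_mul_exp_neg_mul_atTop_nhds_zero s.re (1/2)
        (by norm_num)).const_mul C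

lemma mellin_norm_le (f : ℝ → ℂ) (s : ℂ) :
    ‖mellin f s‖ ≤ ∫ x in Ioi (0:ℝ), x ^ (s.re - 1) * ‖f x‖ := by
  unfold mellin
  refine (norm_integral_le_integral_norm _).trans_eq ?_
  refine setIntegral_congr_fun measurableSet_Ioi fun x hx => ?_
  simp only [norm_smul]
  rw [norm_cpow_eq_rpow_re_of_pos hx]
  simp

lemma norm_mul_lower (σ t a : ℝ) (hσ : 0 < σ) (ha : 0 ≤ a) :
    min 1 (σ ^ 2) * (1 + t ^ 2) ≤ ‖((σ:ℂ) + t * I) * ((σ:ℂ) + t * I + a)‖ := by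
  rw [norm_mul]
  have h0 : ‖(σ:ℂ) + t * I‖ ^ 2 = σ ^ 2 + t ^ 2 := by
    rw [Complex.sq_norm, Complex.normSq_apply]; simp; ring
  have h1 : ‖(σ:ℂ) + t * I + a‖ ^ 2 = (σ + a) ^ 2 + t ^ 2 := by
    rw [Complex.sq_norm, Complex.normSq_apply]; simp; ring
  have h2 : ‖(σ:ℂ) + t * I‖ ≤ ‖(σ:ℂ) + t * I + a‖ := by
    apply (pow_le_pow_iff_left₀ (norm_nonneg _) (norm_nonneg _) two_ne_zero).mp
    rw [h0, h1]; nlinarith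
  have h3 : ‖(σ:ℂ) + t * I‖ ^ 2 ≤ ‖(σ:ℂ) + t * I‖ * ‖(σ:ℂ) + t * I + a‖ := by
    rw [sq]; gcongr
  rw [h0] at h3
  refine le_trans ?_ h3
  nlinarith [min_le_left 1 (σ ^ 2), min_le_right 1 (σ ^ 2), sq_nonneg t]

lemma Wnu_bound (ν : ℝ) (hν : 0 < ν) (σ : ℝ) (hσ : 0 < σ) :
    ∃ K : ℝ, ∀ t : ℝ, ‖Wnu ν ((σ:ℂ) + t * I)‖ ≤ K * (1 + t ^ 2)⁻¹ := by
  set G : ℝ := ∫ x in Ioi (0:ℝ), x ^ (σ + ν + 1 - 1) * ‖((Real.exp (-x) : ℝ) : ℂ)‖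
  set B : ℝ := ∫ x in Ioi (0:ℝ), x ^ (σ + 2 - 1) * ‖(auxF ν x : ℂ)‖
  set m : ℝ := min 1 (σ ^ 2)
  have hm : 0 < m := by positivity
  set P : ℝ := ‖(2:ℂ) ^ (ν:ℂ)‖
  refine ⟨(P * G + P * G + B) / m, fun t => ?_⟩
  set s : ℂ := (σ:ℂ) + t * I with hs
  have hre : s.re = σ := by simp [hs]
  have hs0 : s ≠ 0 := by intro h; rw [h] at hre; simp at hre; linarith
  have hs1 : s + 1 ≠ 0 := by
    intro h; have := congrArg re h; simp [hre] at this; linarith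
  have hsν : s + ν ≠ 0 := by
    intro h; have := congrArg re h; simp [hre] at this; linarith
  have f1 := Wnu_feq ν hν s (by linarith)
  have f2 := Wnu_feq ν hν (s + 1) (by simp; linarith)
  have g1 := Complex.Gamma_add_one (s + ν) hsν
  have hG : ‖Complex.Gamma (s + ν + 1)‖ ≤ G := by
    rw [Complex.Gamma_eq_integral (by simp; linarith), Complex.GammaIntegral_eq_mellin]
    refine (mellin_norm_le _ _).trans_eq ?_
    simp [G, hre]
  have hB : ‖Wnu ν (s + 2)‖ ≤ B := by
    rw [Wnu_eq_mellin]
    refine (mellin_norm_le _ _).trans_eq ?_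
    simp [B, hre]
  have e : Wnu ν s = (2:ℂ) ^ (ν:ℂ) * Complex.Gamma (s + ν + 1) / (s * (s + ν))
      - (2:ℂ) ^ (ν:ℂ) * Complex.Gamma (s + ν + 1) / (s * (s + 1))
      + Wnu ν (s + 2) / (s * (s + 1)) := by
    have e2 : s + 1 + 1 = s + 2 := by ring
    have e3 : s + 1 + ν = s + ν + 1 := by ring
    rw [e2, e3] at f2
    have w1 : Wnu ν (s + 1) =
        ((2:ℂ) ^ (ν:ℂ) * Complex.Gamma (s + ν + 1) - Wnu ν (s + 2)) / (s + 1) := by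
      rw [eq_div_iff hs1, ← f2]; ring
    have w0 : Wnu ν s = ((2:ℂ) ^ (ν:ℂ) * Complex.Gamma (s + ν) - Wnu ν (s + 1)) / s := by
      rw [eq_div_iff hs0, ← f1]; ring
    have w2 : Complex.Gamma (s + ν) = Complex.Gamma (s + ν + 1) / (s + ν) := by
      rw [eq_div_iff hsν, g1]; ring
    rw [w0, w1, w2]
    field_simp
    ring
  have l1 : m * (1 + t ^ 2) ≤ ‖s * (s + 1)‖ := by
    simpa using norm_mul_lower σ t 1 hσ zero_le_one
  have l2 : m * (1 + t ^ 2) ≤ ‖s * (s + ν)‖ := norm_mul_lower σ t ν hσ hν.le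
  have hp : 0 < m * (1 + t ^ 2) := by positivity
  have hP : 0 ≤ P := norm_nonneg _
  have hG0 : 0 ≤ G := (norm_nonneg _).trans hG
  have hB0 : 0 ≤ B := (norm_nonneg _).trans hB
  rw [e]
  calc _ ≤ P * G / (m * (1 + t ^ 2)) + P * G / (m * (1 + t ^ 2)) + B / (m * (1 + t ^ 2)) := by
        refine (norm_add_le _ _).trans (add_le_add ((norm_sub_le _ _).trans (add_le_add ?_ ?_)) ?_)
        · rw [norm_div, norm_mul]; gcongr
        · rw [norm_div, norm_mul]; gcongr
        · rw [norm_div]; gcongr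
    _ = _ := by
        field_simp

lemma Wnu_vert (ν : ℝ) (hν : 0 < ν) (σ : ℝ) (hσ : 0 < σ) :
    VerticalIntegrable (mellin (fun x => (auxF ν x : ℂ))) σ := by
  rw [← funext (Wnu_eq_mellin ν)]
  obtain ⟨K, hK⟩ := Wnu_bound ν hν σ hσ
  refine (integrable_inv_one_add_sq.const_mul K).mono' ?_ (ae_of_all _ hK)
  refine Continuous.aestronglyMeasurable ?_
  rw [continuous_iff_continuousAt]
  intro t
  exact (Wnu_diff ν hν ((σ:ℂ) + t * I) (by simpa using hσ)).continuousAt.comp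
    (f := fun t : ℝ => (σ:ℂ) + t * I) (by fun_prop)

/-- **Analyticity and Mellin inversion for `W_ν`** (Lemma 4.3): for `ν > 0`,
`W_ν(s)` is analytic on `Re(s) > 0`, and for `x, σ > 0`,
`Γ(ν,2x) e^x = (1/(2πi)) ∫_{σ-i∞}^{σ+i∞} x^{-s} W_ν(s) ds`. -/
theorem Wnu_analytic_and_mellin_inversion (ν : ℝ) (hν : 0 < ν) :
    AnalyticOnNhd ℂ (Wnu ν) {s : ℂ | 0 < s.re} ∧
    ∀ x σ : ℝ, 0 < x → 0 < σ →
      ((incGamma ν (2 * x) * Real.exp x : ℝ) : ℂ) =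
        (1 / (2 * Real.pi)) *
          ∫ t : ℝ, (x : ℂ) ^ (-((σ : ℂ) + t * Complex.I)) *
            Wnu ν ((σ : ℂ) + t * Complex.I) := by
  refine ⟨?_, fun x σ hx hσ => ?_⟩
  · have ho : IsOpen {s : ℂ | 0 < s.re} := isOpen_lt continuous_const continuous_re
    exact DifferentiableOn.analyticOnNhd
      (fun s hs => (Wnu_diff ν hν s hs).differentiableWithinAt) ho
  · have h := mellinInv_mellin_eq σ (fun x => (auxF ν x : ℂ)) hx
      (auxF_conv ν hν σ (by simpa using hσ)) (Wnu_vert ν hν σ hσ)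
      ((auxF_cont ν hν).continuousAt (Ioi_mem_nhds hx))
    rw [← funext (Wnu_eq_mellin ν)] at h
    change (auxF ν x : ℂ) = _
    rw [← h, mellinInv, Complex.real_smul]
    simp only [smul_eq_mul]
    push_cast
    rfl
end
end
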